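/- arXiv:2501.14928 — 4 statements merged into one kernel-verified Lean document; each statement's English description precedes it below -/
import Mathlib

section
/- Private DEC upper bound for linear regression under L1 estimation error: There is a universal constant C with the following property. Let d ≥ 1 and let X be a finite subset of the closed Euclidean unit ball of ℝ^d. For ν ∈ Δ(X) and θ in the unit ball B^d(1), let M_{ν,θ} be the distribution of (x,y) ∈ X × {−1,1} with x ∼ ν and E[y | x] = ⟨θ, x⟩, and let M_Lin := { M_{ν,θ} : ν ∈ Δ(X), θ ∈ B^d(1) }. Take decision space Π = B^d(1) and loss L₁(M_{ν,θ}, θ̂) := E_{x∼ν} |⟨x, θ̂ − θ⟩|. Then for every γ > 0 and every probability distribution M̄ on X × {−1,1}: p-dec^{o,LDP}_γ(M_Lin, M̄) ≤ C·d/γ. Consequently, for every ε > 0: p-dec^{LDP}_ε(M_Lin) ≤ 2·√(C·d)·ε. -/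
open MeasureTheory
open scoped ENNReal

/-- `D_ℓ(P, Q) := |E_{z ∼ P} ℓ(z) − E_{z ∼ Q} ℓ(z)|`. -/
noncomputable def Dl {Z : Type*} [MeasurableSpace Z] (ℓ : Z → ℝ) (P Q : Measure Z) : ℝ :=
  |(∫ z, ℓ z ∂P) - ∫ z, ℓ z ∂Q|

/-- A distribution `q ∈ Δ(Θ × L)` over pairs of a decision and a measurable `[0,1]`-valued
test function on `Z`. -/
def IsTestDist {Θ Z : Type*} [MeasurableSpace Θ] [MeasurableSpace Z]
    (q : Measure (Θ × (Z → ℝ))) : Prop :=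
  IsProbabilityMeasure q ∧
    q {pl | Measurable pl.2 ∧ ∀ z, pl.2 z ∈ Set.Icc (0 : ℝ) 1} = 1

/-- `E_{(π,ℓ)∼q} D_ℓ(M_i(π), M̄(π))²`. -/
noncomputable def testErr {Θ Z ι : Type*} [MeasurableSpace Θ] [MeasurableSpace Z]
    (Ms : ι → Θ → Measure Z) (Mb : Θ → Measure Z)
    (q : Measure (Θ × (Z → ℝ))) (i : ι) : ℝ :=
  ∫ pl, (Dl pl.2 (Ms i pl.1) (Mb pl.1)) ^ 2 ∂q

/-- The private PAC-DEC of the model class `(Ms i)_{i : ι}` with loss `loss` and reference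
model `Mb`:
`p-dec^{LDP}_ε(M, M̄) := inf_{p ∈ Δ(Θ), q ∈ Δ(Θ×L)}
  sup { E_{π∼p} L(M,π) : M ∈ M, E_{(π,ℓ)∼q} D_ℓ(M(π), M̄(π))² ≤ ε² }`,
where the supremum over the empty set is `−∞` (i.e. `⊥` in `EReal`). -/
noncomputable def pdecLDP {Θ Z ι : Type*} [MeasurableSpace Θ] [MeasurableSpace Z]
    (Ms : ι → Θ → Measure Z) (loss : ι → Θ → ℝ) (Mb : Θ → Measure Z) (ε : ℝ) : EReal :=
  ⨅ (p : {p : Measure Θ // IsProbabilityMeasure p})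
    (q : {q : Measure (Θ × (Z → ℝ)) // IsTestDist q}),
    sSup {x : EReal | ∃ i : ι, testErr Ms Mb q.1 i ≤ ε ^ 2 ∧
      x = ((∫ π, loss i π ∂p.1 : ℝ) : EReal)}

open scoped RealInnerProductSpace

/-- The offset private PAC-DEC
`p-dec^{o,LDP}_γ(M, M̄) := inf_{p ∈ Δ(Θ), q ∈ Δ(Θ×L)}
  sup_{M ∈ M} { E_{π∼p} L(M,π) − γ E_{(π,ℓ)∼q} D_ℓ(M(π), M̄(π))² }`. -/
noncomputable def pdecOffLDP {Θ Z ι : Type*} [MeasurableSpace Θ] [MeasurableSpace Z]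
    (Ms : ι → Θ → Measure Z) (loss : ι → Θ → ℝ) (Mb : Θ → Measure Z) (γ : ℝ) : EReal :=
  ⨅ (p : {p : Measure Θ // IsProbabilityMeasure p})
    (q : {q : Measure (Θ × (Z → ℝ)) // IsTestDist q}),
    ⨆ i : ι, (((∫ π, loss i π ∂p.1) - γ * testErr Ms Mb q.1 i : ℝ) : EReal)

/-- The linear model `M_{ν,θ}`: the distribution of `(x, y) ∈ X × {−1,1}` (labels encoded
by `Bool`, `true ↔ +1`) with `x ∼ ν` and `E[y | x] = ⟪θ, x⟫`. -/
noncomputable def linModel {d : ℕ} (X : Finset (EuclideanSpace ℝ (Fin d)))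
    (ν : Measure {x // x ∈ X}) (θ : EuclideanSpace ℝ (Fin d)) :
    Measure ({x // x ∈ X} × Bool) :=
  ∑ x : {x // x ∈ X}, ν {x} •
    (ENNReal.ofReal ((1 + ⟪θ, (x : EuclideanSpace ℝ (Fin d))⟫) / 2) •
        Measure.dirac (x, true) +
      ENNReal.ofReal ((1 - ⟪θ, (x : EuclideanSpace ℝ (Fin d))⟫) / 2) •
        Measure.dirac (x, false))

/-- The class `M_Lin = {M_{ν,θ} : ν ∈ Δ(X), θ ∈ B^d(1)}` of linear models, indexed by the
pair `(ν, θ)`; the decision space is `B^d(1)`. -/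
noncomputable def linMs {d : ℕ} (X : Finset (EuclideanSpace ℝ (Fin d))) :
    ({ν : Measure {x // x ∈ X} // IsProbabilityMeasure ν} ×
        {θ : EuclideanSpace ℝ (Fin d) // ‖θ‖ ≤ 1}) →
      {θ : EuclideanSpace ℝ (Fin d) // ‖θ‖ ≤ 1} → Measure ({x // x ∈ X} × Bool) :=
  fun iv _ => linModel X iv.1.1 iv.2.1

/-- The `L₁` estimation error `L₁(M_{ν,θ}, θ̂) := E_{x∼ν} |⟪x, θ̂ − θ⟫|`. -/
noncomputable def linLossL1 {d : ℕ} (X : Finset (EuclideanSpace ℝ (Fin d))) :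
    ({ν : Measure {x // x ∈ X} // IsProbabilityMeasure ν} ×
        {θ : EuclideanSpace ℝ (Fin d) // ‖θ‖ ≤ 1}) →
      {θ : EuclideanSpace ℝ (Fin d) // ‖θ‖ ≤ 1} → ℝ :=
  fun iv θhat => ∑ x : {x // x ∈ X},
    (iv.1.1 {x}).toReal * |⟪(x : EuclideanSpace ℝ (Fin d)), (θhat : _) - (iv.2 : _)⟫|

/-- The class of all finite mixtures of linear models, i.e. `co(M_Lin)`. -/
def coLin {d : ℕ} (X : Finset (EuclideanSpace ℝ (Fin d))) :
    Set (Measure ({x // x ∈ X} × Bool)) :=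
  {Mb | ∃ (n : ℕ) (w : Fin n → ℝ) (ν : Fin n → Measure {x // x ∈ X})
      (θ : Fin n → EuclideanSpace ℝ (Fin d)),
      (∀ k, 0 ≤ w k) ∧ (∑ k, w k) = 1 ∧ (∀ k, IsProbabilityMeasure (ν k)) ∧
      (∀ k, ‖θ k‖ ≤ 1) ∧ Mb = ∑ k, ENNReal.ofReal (w k) • linModel X (ν k) (θ k)}

/-!
Fix `λ ∝ 1 / γ`. The *information matrix* is the positive definite `U` with
`λ² U² + E_{M̄} (U x) (U x)ᵀ / ‖U x‖ = 1`; it comes from a Banach fixed point in the logarithms of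
the weights `1 / ‖U x‖`. The decision `t` is the least squares regressor on the unit ball for `M̄`
reweighted by `1 / ‖U x‖`.

The tests are built from `sin ⟪g, U x / ‖U x‖⟫` and `cos ⟪g, V x / ‖V x‖⟫` with `g` a standard
Gaussian and `V² = U`. Their kernels are, up to normalization, `sinh ⟪u, v⟫` and `cosh ⟪u, v⟫`.
These dominate the single Taylor terms `⟪u, v⟫` and `⟪u, v⟫² / 2` as positive semidefinite kernels,
so a small testing error bounds, uniformly in the direction, the linear and quadratic moments in
which `M` and `M̄` differ.

Write `θ - t = U a`. The first test and the optimality of `t` bound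
`E_M ⟪θ - t, x⟫² / ‖U x‖` by a multiple of `‖a‖ τ`, where `τ²` is the testing error. The second test
and the equation for `U` then bound `‖a‖` by a multiple of `λ + τ`. A third test, of `λ ‖U x‖`,
together with the trace of that equation gives `λ E_M ‖U x‖ ≤ λ d + O(τ)`. The theorem follows from
`2 |⟪θ - t, x⟫| ≤ λ ‖U x‖ + ⟪θ - t, x⟫² / (λ ‖U x‖)`.
-/

open ProbabilityTheory NormedSpace

section GaussianTrigonometricSums

variable {E : Type*} [NormedAddCommGroup E] [InnerProductSpace ℝ E]
  {ι : Type*} [Fintype ι]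

theorem integral_sq_sum_mul {Ω : Type*} [MeasurableSpace Ω] {μ : Measure Ω} (b : ι → ℝ)
    {f : ι → Ω → ℝ} (hf : ∀ i j, Integrable (fun ω => f i ω * f j ω) μ) :
    ∫ ω, (∑ i, b i * f i ω) ^ 2 ∂μ = ∑ i, ∑ j, b i * b j * ∫ ω, f i ω * f j ω ∂μ := by
  simp_rw [sq, Finset.sum_mul_sum, mul_mul_mul_comm (b _)]
  have hint (i j : ι) : Integrable (fun ω => b i * b j * (f i ω * f j ω)) μ :=
    (hf i j).const_mul _
  rw [integral_finsetSum _ fun i _ => integrable_finsetSum _ fun j _ => hint i j]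
  simp_rw [integral_finsetSum _ fun j _ => hint _ j, integral_const_mul]

theorem sq_sum_mul_inner_normalize_pow {n : ℕ} (hn : n ≠ 0) (b : ι → ℝ) (w : ι → E) (a : E) :
    (∑ i, b i * ⟪a, normalize (w i)⟫ ^ n) ^ 2 = Real.exp 1 *
      (∑ i, b i * Real.exp (-‖normalize (w i)‖ ^ 2 / 2) * ⟪a, normalize (w i)⟫ ^ n) ^ 2 := by
  have hterm (i : ι) : b i * ⟪a, normalize (w i)⟫ ^ n = Real.exp (1 / 2) *
      (b i * Real.exp (-‖normalize (w i)‖ ^ 2 / 2) * ⟪a, normalize (w i)⟫ ^ n) := by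
    rcases eq_or_ne (w i) 0 with hw | hw
    · simp [hw, hn]
    · rw [norm_normalize_eq_one_iff.2 hw, mul_right_comm (b i), mul_left_comm, ← Real.exp_add]
      norm_num
  simp_rw [hterm]
  rw [← Finset.mul_sum, mul_pow, ← Real.exp_nat_mul]
  norm_num

variable [FiniteDimensional ℝ E]

/-- The `n`-th tensor power of `u`, in the coordinates of an orthonormal basis. It is the feature
map of the kernel `⟪u, v⟫ ^ n`. -/
noncomputable def tensorPow (n : ℕ) (u : E) :
    EuclideanSpace ℝ (Fin n → Fin (Module.finrank ℝ E)) :=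
  WithLp.toLp 2 fun p => ∏ j, ⟪u, stdOrthonormalBasis ℝ E (p j)⟫

theorem inner_tensorPow (n : ℕ) (u v : E) : ⟪tensorPow n u, tensorPow n v⟫ = ⟪u, v⟫ ^ n := by
  rw [← (stdOrthonormalBasis ℝ E).sum_inner_mul_inner u v, Fintype.sum_pow, PiLp.inner_apply]
  refine Finset.sum_congr rfl fun p _ => ?_
  rw [Finset.prod_mul_distrib]
  simp [tensorPow, real_inner_comm, mul_comm]

theorem sum_sum_mul_inner_pow_eq (n : ℕ) (c : ι → ℝ) (u : ι → E) :
    ∑ i, ∑ j, c i * c j * ⟪u i, u j⟫ ^ n = ‖∑ i, c i • tensorPow n (u i)‖ ^ 2 := by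
  simp_rw [← real_inner_self_eq_norm_sq, sum_inner, inner_sum, real_inner_smul_left,
    real_inner_smul_right, inner_tensorPow, mul_assoc]

theorem sq_sum_mul_inner_pow_le (n : ℕ) (c : ι → ℝ) (u : ι → E) (a : E) :
    (∑ i, c i * ⟪a, u i⟫ ^ n) ^ 2 ≤
      ‖a‖ ^ (2 * n) * ∑ i, ∑ j, c i * c j * ⟪u i, u j⟫ ^ n := by
  have hsum : ∑ i, c i * ⟪a, u i⟫ ^ n = ⟪tensorPow n a, ∑ i, c i • tensorPow n (u i)⟫ := by
    simp_rw [inner_sum, real_inner_smul_right, inner_tensorPow]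
  have hnorm : ‖a‖ ^ (2 * n) = ‖tensorPow n a‖ ^ 2 := by
    rw [← real_inner_self_eq_norm_sq, inner_tensorPow, real_inner_self_eq_norm_sq, pow_mul]
  rw [hsum, hnorm, sum_sum_mul_inner_pow_eq, ← mul_pow]
  exact sq_le_sq.2 (by simpa using abs_real_inner_le_norm _ _)

theorem mul_sum_sum_inner_pow_le_of_hasSum {f : ℝ → ℝ} {k : ℕ → ℕ} {a : ℕ → ℝ}
    (ha : ∀ n, 0 ≤ a n) (hf : ∀ t, HasSum (fun n => a n * t ^ k n) (f t)) (n : ℕ)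
    (c : ι → ℝ) (u : ι → E) :
    a n * ∑ i, ∑ j, c i * c j * ⟪u i, u j⟫ ^ k n ≤ ∑ i, ∑ j, c i * c j * f ⟪u i, u j⟫ := by
  have hsum : HasSum (fun m => a m * ∑ i, ∑ j, c i * c j * ⟪u i, u j⟫ ^ k m)
      (∑ i, ∑ j, c i * c j * f ⟪u i, u j⟫) := by
    simp_rw [Finset.mul_sum, mul_left_comm (a _)]
    exact hasSum_sum fun i _ => hasSum_sum fun j _ => (hf _).mul_left _
  refine le_hasSum hsum n fun m _ => mul_nonneg (ha m) ?_
  rw [sum_sum_mul_inner_pow_eq]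
  positivity

theorem sum_sum_mul_inner_le_sinh (c : ι → ℝ) (u : ι → E) :
    ∑ i, ∑ j, c i * c j * ⟪u i, u j⟫ ≤ ∑ i, ∑ j, c i * c j * Real.sinh ⟪u i, u j⟫ := by
  simpa using mul_sum_sum_inner_pow_le_of_hasSum
    (a := fun n => ((2 * n + 1).factorial : ℝ)⁻¹) (k := fun n => 2 * n + 1)
    (fun n => by positivity)
    (fun t => by simpa only [div_eq_inv_mul] using Real.hasSum_sinh t) 0 c u

theorem sum_sum_mul_inner_sq_le_cosh (c : ι → ℝ) (u : ι → E) :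
    ∑ i, ∑ j, c i * c j * ⟪u i, u j⟫ ^ 2 ≤
      2 * ∑ i, ∑ j, c i * c j * Real.cosh ⟪u i, u j⟫ := by
  have h := mul_sum_sum_inner_pow_le_of_hasSum
    (a := fun n => ((2 * n).factorial : ℝ)⁻¹) (k := fun n => 2 * n) (fun n => by positivity)
    (fun t => by simpa only [div_eq_inv_mul] using Real.hasSum_cosh t) 1 c u
  norm_num at h
  linarith

variable [MeasurableSpace E] [BorelSpace E]

theorem integrable_stdGaussian_of_continuous_of_abs_le {f : E → ℝ} (hf : Continuous f) {C : ℝ}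
    (hC : ∀ g, |f g| ≤ C) : Integrable f (stdGaussian E) :=
  .of_bound hf.measurable.aestronglyMeasurable C (ae_of_all _ hC)

theorem integrable_cos_inner_stdGaussian (u : E) :
    Integrable (fun g => Real.cos ⟪g, u⟫) (stdGaussian E) :=
  integrable_stdGaussian_of_continuous_of_abs_le (by fun_prop) fun _ => Real.abs_cos_le_one _

theorem integral_cos_inner_stdGaussian (u : E) :
    ∫ g, Real.cos ⟪g, u⟫ ∂(stdGaussian E) = Real.exp (-‖u‖ ^ 2 / 2) := by
  have hint : Integrable (fun g : E => Complex.exp (⟪g, u⟫ * Complex.I)) (stdGaussian E) :=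
    .of_bound (Measurable.aestronglyMeasurable (by fun_prop)) 1
      (ae_of_all _ fun g => (Complex.norm_exp_ofReal_mul_I _).le)
  calc ∫ g, Real.cos ⟪g, u⟫ ∂(stdGaussian E)
      = (∫ g, Complex.exp (⟪g, u⟫ * Complex.I) ∂(stdGaussian E)).re := by
        simp_rw [← Complex.exp_ofReal_mul_I_re]
        exact integral_re hint
    _ = Real.exp (-‖u‖ ^ 2 / 2) := by
        rw [← charFun_apply, charFun_stdGaussian]
        exact_mod_cast Complex.exp_ofReal_re _

theorem integral_sin_mul_sin_stdGaussian (u v : E) :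
    ∫ g, Real.sin ⟪g, u⟫ * Real.sin ⟪g, v⟫ ∂(stdGaussian E) =
      Real.exp (-‖u‖ ^ 2 / 2) * Real.exp (-‖v‖ ^ 2 / 2) * Real.sinh ⟪u, v⟫ := by
  have hprod (g : E) : Real.sin ⟪g, u⟫ * Real.sin ⟪g, v⟫ =
      (Real.cos ⟪g, u - v⟫ - Real.cos ⟪g, u + v⟫) / 2 := by
    rw [inner_sub_right, inner_add_right, Real.cos_sub, Real.cos_add]
    ring
  simp_rw [hprod]
  rw [integral_div, integral_sub (integrable_cos_inner_stdGaussian _)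
      (integrable_cos_inner_stdGaussian _), integral_cos_inner_stdGaussian,
    integral_cos_inner_stdGaussian, Real.sinh_eq, norm_sub_sq_real, norm_add_sq_real,
    ← Real.exp_add, mul_div_assoc', mul_sub, ← Real.exp_add, ← Real.exp_add]
  ring_nf

theorem integral_cos_mul_cos_stdGaussian (u v : E) :
    ∫ g, Real.cos ⟪g, u⟫ * Real.cos ⟪g, v⟫ ∂(stdGaussian E) =
      Real.exp (-‖u‖ ^ 2 / 2) * Real.exp (-‖v‖ ^ 2 / 2) * Real.cosh ⟪u, v⟫ := by
  have hprod (g : E) : Real.cos ⟪g, u⟫ * Real.cos ⟪g, v⟫ =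
      (Real.cos ⟪g, u - v⟫ + Real.cos ⟪g, u + v⟫) / 2 := by
    rw [inner_sub_right, inner_add_right, Real.cos_sub, Real.cos_add]
    ring
  simp_rw [hprod]
  rw [integral_div, integral_add (integrable_cos_inner_stdGaussian _)
      (integrable_cos_inner_stdGaussian _), integral_cos_inner_stdGaussian,
    integral_cos_inner_stdGaussian, Real.cosh_eq, norm_sub_sq_real, norm_add_sq_real,
    ← Real.exp_add, mul_div_assoc', mul_add, ← Real.exp_add, ← Real.exp_add]
  ring_nf

theorem integral_sq_sum_mul_sin (b : ι → ℝ) (u : ι → E) :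
    ∫ g, (∑ i, b i * Real.sin ⟪g, u i⟫) ^ 2 ∂(stdGaussian E) =
      ∑ i, ∑ j, (b i * Real.exp (-‖u i‖ ^ 2 / 2)) * (b j * Real.exp (-‖u j‖ ^ 2 / 2)) *
        Real.sinh ⟪u i, u j⟫ := by
  rw [integral_sq_sum_mul b fun i j =>
    integrable_stdGaussian_of_continuous_of_abs_le (C := 1) (by fun_prop) fun g => by
      rw [abs_mul]
      exact mul_le_one₀ (Real.abs_sin_le_one _) (abs_nonneg _) (Real.abs_sin_le_one _)]
  simp_rw [integral_sin_mul_sin_stdGaussian, mul_mul_mul_comm, mul_assoc]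

theorem integral_sq_sum_mul_cos (b : ι → ℝ) (u : ι → E) :
    ∫ g, (∑ i, b i * Real.cos ⟪g, u i⟫) ^ 2 ∂(stdGaussian E) =
      ∑ i, ∑ j, (b i * Real.exp (-‖u i‖ ^ 2 / 2)) * (b j * Real.exp (-‖u j‖ ^ 2 / 2)) *
        Real.cosh ⟪u i, u j⟫ := by
  rw [integral_sq_sum_mul b fun i j =>
    integrable_stdGaussian_of_continuous_of_abs_le (C := 1) (by fun_prop) fun g => by
      rw [abs_mul]
      exact mul_le_one₀ (Real.abs_cos_le_one _) (abs_nonneg _) (Real.abs_cos_le_one _)]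
  simp_rw [integral_cos_mul_cos_stdGaussian, mul_mul_mul_comm, mul_assoc]

theorem sq_sum_mul_inner_normalize_le (b : ι → ℝ) (w : ι → E) (a : E) :
    (∑ i, b i * ⟪a, normalize (w i)⟫) ^ 2 ≤ ‖a‖ ^ 2 * (Real.exp 1 *
      ∫ g, (∑ i, b i * Real.sin ⟪g, normalize (w i)⟫) ^ 2 ∂(stdGaussian E)) := by
  have h := sq_sum_mul_inner_normalize_pow one_ne_zero b w a
  simp_rw [pow_one] at h
  rw [h, integral_sq_sum_mul_sin, mul_left_comm]
  gcongr
  refine le_trans ?_ (mul_le_mul_of_nonneg_left (sum_sum_mul_inner_le_sinh _ _) (sq_nonneg _))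
  simpa using sq_sum_mul_inner_pow_le 1 (fun i => b i * Real.exp (-‖normalize (w i)‖ ^ 2 / 2))
    (fun i => normalize (w i)) a

theorem sq_sum_mul_inner_normalize_sq_le (b : ι → ℝ) (w : ι → E) (a : E) :
    (∑ i, b i * ⟪a, normalize (w i)⟫ ^ 2) ^ 2 ≤ ‖a‖ ^ 4 * (2 * Real.exp 1 *
      ∫ g, (∑ i, b i * Real.cos ⟪g, normalize (w i)⟫) ^ 2 ∂(stdGaussian E)) := by
  rw [sq_sum_mul_inner_normalize_pow two_ne_zero b w a, integral_sq_sum_mul_cos,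
    mul_comm 2, mul_assoc, mul_left_comm]
  gcongr
  refine (sq_sum_mul_inner_pow_le 2 _ _ a).trans ?_
  gcongr
  exact sum_sum_mul_inner_sq_le_cosh _ _

end GaussianTrigonometricSums

section RidgeLeverage

variable {E : Type*} [NormedAddCommGroup E] [InnerProductSpace ℝ E]

theorem inner_le_mul_inner_of_mul_eq_one {A B A' B' : E →ₗ[ℝ] E} {c : ℝ} (hA : A.IsPositive)
    (hA' : A * A' = 1) (hB' : B * B' = 1) (hc : 0 < c) (hAB : ∀ v, ⟪A v, v⟫ ≤ c * ⟪B v, v⟫)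
    (z : E) :
    ⟪B' z, z⟫ ≤ c * ⟪A' z, z⟫ := by
  have hAz : A (A' z) = z := LinearMap.congr_fun hA' z
  have hBz : B (B' z) = z := LinearMap.congr_fun hB' z
  have hsq : 0 ≤ ⟪A (B' z - c • A' z), B' z - c • A' z⟫ := hA.2 _
  have hcross : ⟪A (B' z), A' z⟫ = ⟪B' z, z⟫ := by rw [hA.isSymmetric, hAz]
  have hle := hAB (B' z)
  simp only [map_sub, map_smul, inner_sub_left, inner_sub_right, real_inner_smul_left,
    real_inner_smul_right, hAz, hcross, real_inner_comm _ z] at hsq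
  rw [hBz, real_inner_comm _ z] at hle
  exact le_of_mul_le_mul_left (by linarith) hc

variable {ι : Type*} [Fintype ι]

/-- The ridge-regularised second moment operator `λ² + ∑ᵢ wᵢ xᵢ xᵢᵀ` of the weighted points `x`. -/
noncomputable def ridgeMoment (lam : ℝ) (w : ι → ℝ) (x : ι → E) : E →ₗ[ℝ] E :=
  lam ^ 2 • 1 + ∑ i, w i • (InnerProductSpace.rankOne ℝ (x i) (x i) : E →ₗ[ℝ] E)

/-- The ridge leverage score `⟪(λ² + ∑ᵢ wᵢ xᵢ xᵢᵀ)⁻¹ z, z⟫` of `z` against the weighted points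
`x`. -/
noncomputable def leverage (lam : ℝ) (w : ι → ℝ) (x : ι → E) (z : E) : ℝ :=
  ⟪Ring.inverse (ridgeMoment lam w x) z, z⟫

variable {lam : ℝ} {w w' : ι → ℝ} {x : ι → E}

theorem inner_ridgeMoment_self (v : E) :
    ⟪ridgeMoment lam w x v, v⟫ = lam ^ 2 * ‖v‖ ^ 2 + ∑ i, w i * ⟪v, x i⟫ ^ 2 := by
  simp [ridgeMoment, inner_add_left, sum_inner, real_inner_smul_right, real_inner_comm, sq]

theorem isPositive_ridgeMoment (hw : ∀ i, 0 ≤ w i) : (ridgeMoment lam w x).IsPositive :=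
  (LinearMap.isPositive_one.smul_of_nonneg (sq_nonneg lam)).add <|
    LinearMap.isPositive_sum _ fun i _ =>
      ((InnerProductSpace.isPositive_rankOne_self (x i)).toLinearMap).smul_of_nonneg (hw i)

theorem inner_ridgeMoment_self_pos (hlam : lam ≠ 0) (hw : ∀ i, 0 ≤ w i) {v : E} (hv : v ≠ 0) :
    0 < ⟪ridgeMoment lam w x v, v⟫ := by
  rw [inner_ridgeMoment_self]
  have : 0 ≤ ∑ i, w i * ⟪v, x i⟫ ^ 2 :=
    Finset.sum_nonneg fun i _ => mul_nonneg (hw i) (sq_nonneg _)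
  positivity

variable [FiniteDimensional ℝ E]

theorem isUnit_ridgeMoment (hlam : lam ≠ 0) (hw : ∀ i, 0 ≤ w i) : IsUnit (ridgeMoment lam w x) := by
  rw [LinearMap.isUnit_iff_ker_eq_bot, LinearMap.ker_eq_bot']
  intro v hv
  by_contra hv0
  simpa [hv] using inner_ridgeMoment_self_pos (x := x) hlam hw hv0

theorem ridgeMoment_inverse_apply (hlam : lam ≠ 0) (hw : ∀ i, 0 ≤ w i) (z : E) :
    ridgeMoment lam w x (Ring.inverse (ridgeMoment lam w x) z) = z :=
  LinearMap.congr_fun (Ring.mul_inverse_cancel _ (isUnit_ridgeMoment hlam hw)) z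

theorem isPositive_inverse_ridgeMoment (hlam : lam ≠ 0) (hw : ∀ i, 0 ≤ w i) :
    (Ring.inverse (ridgeMoment lam w x)).IsPositive := by
  have hpos := isPositive_ridgeMoment (lam := lam) (x := x) hw
  have hinv := ridgeMoment_inverse_apply (x := x) hlam hw
  refine ⟨fun y z => ?_, fun z => ?_⟩
  · nth_rw 1 [← hinv z]
    rw [← hpos.isSymmetric, hinv]
  · nth_rw 2 [← hinv z]
    rw [← hpos.isSymmetric]
    exact hpos.2 _

theorem leverage_pos (hlam : lam ≠ 0) (hw : ∀ i, 0 ≤ w i) {z : E} (hz : z ≠ 0) :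
    0 < leverage lam w x z := by
  have hinv := ridgeMoment_inverse_apply (x := x) hlam hw z
  have hne : Ring.inverse (ridgeMoment lam w x) z ≠ 0 := fun h => hz (by rw [← hinv, h, map_zero])
  have hpos := inner_ridgeMoment_self_pos (x := x) hlam hw hne
  rwa [hinv, real_inner_comm] at hpos

theorem leverage_le_mul (hlam : lam ≠ 0) (hw : ∀ i, 0 ≤ w i) (hw' : ∀ i, 0 ≤ w' i) {c : ℝ}
    (hc : 1 ≤ c) (hle : ∀ i, w i ≤ c * w' i) (z : E) :
    leverage lam w' x z ≤ c * leverage lam w x z := by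
  refine inner_le_mul_inner_of_mul_eq_one (isPositive_ridgeMoment hw)
    (Ring.mul_inverse_cancel _ (isUnit_ridgeMoment hlam hw))
    (Ring.mul_inverse_cancel _ (isUnit_ridgeMoment hlam hw')) (by positivity) (fun v => ?_) z
  rw [inner_ridgeMoment_self, inner_ridgeMoment_self, mul_add, Finset.mul_sum]
  refine add_le_add (le_mul_of_one_le_left (by positivity) hc) (Finset.sum_le_sum fun i _ => ?_)
  rw [← mul_assoc]
  gcongr
  exact hle i

variable {ν : ι → ℝ}

theorem log_leverage_le_add_dist (hlam : lam ≠ 0) (hν : ∀ i, 0 ≤ ν i) (b b' : ι → ℝ) (z : E) :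
    Real.log (leverage lam (fun i => ν i * Real.exp (b' i)) x z) ≤
      Real.log (leverage lam (fun i => ν i * Real.exp (b i)) x z) + dist b b' := by
  rcases eq_or_ne z 0 with rfl | hz
  · simp [leverage]
  have hw (b : ι → ℝ) (i : ι) : 0 ≤ ν i * Real.exp (b i) :=
    mul_nonneg (hν i) (Real.exp_pos _).le
  rw [← Real.log_exp (dist b b'), ← Real.log_mul (leverage_pos hlam (hw b) hz).ne'
    (Real.exp_pos _).ne']
  refine Real.log_le_log (leverage_pos hlam (hw b') hz) ?_
  rw [mul_comm]
  refine leverage_le_mul hlam (hw b) (hw b') (Real.one_le_exp dist_nonneg) (fun i => ?_) z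
  rw [mul_left_comm, ← Real.exp_add]
  gcongr
  · exact hν i
  · have hdist := dist_le_pi_dist b b' i
    rw [Real.dist_eq] at hdist
    linarith [le_abs_self (b i - b' i), hdist]

-- The logarithms of `w i / ν i` are a fixed point of a `1/2`-Lipschitz map: rescaling the weights
-- by factors in `[c⁻¹, c]` changes `leverage` by at most a factor `c`, and the square root halves
-- the exponent.
theorem exists_eq_div_sqrt_leverage (hlam : lam ≠ 0) (hν : ∀ i, 0 ≤ ν i) (x : ι → E) :
    ∃ w : ι → ℝ, (∀ i, 0 ≤ w i) ∧ ∀ i, x i ≠ 0 → w i = ν i / √(leverage lam w x (x i)) := by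
  let lev (b : ι → ℝ) (i : ι) : ℝ := leverage lam (fun j => ν j * Real.exp (b j)) x (x i)
  have hcontr : ContractingWith (1 / 2) fun b i => -(Real.log (lev b i) / 2) := by
    refine ⟨by rw [← NNReal.coe_lt_coe]; norm_num, LipschitzWith.of_dist_le_mul fun b b' => ?_⟩
    refine (dist_pi_le_iff (by positivity)).2 fun i => ?_
    have hle := log_leverage_le_add_dist hlam hν b b' (x := x) (x i)
    have hge := log_leverage_le_add_dist hlam hν b' b (x := x) (x i)
    rw [dist_comm b' b] at hge
    rw [Real.dist_eq, abs_le]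
    simp only [lev, NNReal.coe_div, NNReal.coe_one, NNReal.coe_ofNat]
    constructor <;> linarith
  obtain ⟨b, hb, -⟩ := hcontr.exists_fixedPoint 0 (edist_ne_top _ _)
  have hw (i : ι) : 0 ≤ ν i * Real.exp (b i) := mul_nonneg (hν i) (Real.exp_pos _).le
  refine ⟨fun i => ν i * Real.exp (b i), hw, fun i hi => ?_⟩
  have hpos : 0 < lev b i := leverage_pos hlam hw hi
  change ν i * Real.exp (b i) = ν i / √(lev b i)
  rw [div_eq_mul_inv, ← congrFun hb i, Real.exp_neg, Real.exp_half, Real.exp_log hpos]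

end RidgeLeverage

section InformationMatrix

variable {E : Type*} [NormedAddCommGroup E] [InnerProductSpace ℝ E] {ι : Type*} [Fintype ι]

/-- `V` is a symmetric square root of the information matrix `U = V²` of the weighted points `x`,
which solves `λ² U² + ∑ᵢ νᵢ (U xᵢ) (U xᵢ)ᵀ / ‖U xᵢ‖ = 1`. The equation is stated as an identity
of quadratic forms. -/
structure IsInfoRoot (lam : ℝ) (ν : ι → ℝ) (x : ι → E) (V : E →ₗ[ℝ] E) : Prop where
  isSymmetric : V.IsSymmetric
  norm_sq_eq (v : E) :
    ‖v‖ ^ 2 = lam ^ 2 * ‖V (V v)‖ ^ 2 + ∑ i, ν i * (⟪V (V v), x i⟫ ^ 2 / ‖V (V (x i))‖)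

variable {lam : ℝ} {ν : ι → ℝ} {x : ι → E} {V : E →ₗ[ℝ] E}

namespace IsInfoRoot

theorem mul_norm_apply_apply_le (hV : IsInfoRoot lam ν x V) (hν : ∀ i, 0 ≤ ν i) (v : E) :
    lam * ‖V (V v)‖ ≤ ‖v‖ := by
  have hsum : 0 ≤ ∑ i, ν i * (⟪V (V v), x i⟫ ^ 2 / ‖V (V (x i))‖) :=
    Finset.sum_nonneg fun i _ => mul_nonneg (hν i) (by positivity)
  refine (abs_le_of_sq_le_sq' ?_ (norm_nonneg v)).2
  rw [mul_pow, hV.norm_sq_eq v]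
  linarith

theorem apply_apply_injective (hV : IsInfoRoot lam ν x V) : Function.Injective (V * V) := by
  rw [injective_iff_map_eq_zero]
  intro v hv
  rw [Module.End.mul_apply] at hv
  simpa [hv] using hV.norm_sq_eq v

variable [FiniteDimensional ℝ E]

theorem exists_apply_apply_eq (hV : IsInfoRoot lam ν x V) (v : E) : ∃ a, V (V a) = v :=
  LinearMap.surjective_of_injective hV.apply_apply_injective v

-- The trace of the equation defining the information matrix.
theorem sum_mul_norm_apply_apply_le (hV : IsInfoRoot lam ν x V) :
    ∑ i, ν i * ‖V (V (x i))‖ ≤ Module.finrank ℝ E := by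
  let e := stdOrthonormalBasis ℝ E
  have hparseval (i : ι) : ∑ k, ⟪V (V (e k)), x i⟫ ^ 2 = ‖V (V (x i))‖ ^ 2 := by
    simp_rw [← e.sum_sq_norm_inner_right (V (V (x i))), Real.norm_eq_abs, sq_abs, hV.isSymmetric _]
  have htrace : (Module.finrank ℝ E : ℝ) =
      lam ^ 2 * ∑ k, ‖V (V (e k))‖ ^ 2 + ∑ i, ν i * ‖V (V (x i))‖ := by
    calc (Module.finrank ℝ E : ℝ)
        = ∑ k, ‖e k‖ ^ 2 := by simp
      _ = lam ^ 2 * ∑ k, ‖V (V (e k))‖ ^ 2 +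
          ∑ i, ν i * ((∑ k, ⟪V (V (e k)), x i⟫ ^ 2) / ‖V (V (x i))‖) := by
        simp_rw [hV.norm_sq_eq (e _), Finset.sum_add_distrib, Finset.mul_sum, Finset.sum_div,
          Finset.mul_sum]
        rw [Finset.sum_comm (s := Finset.univ (α := ι))]
      _ = lam ^ 2 * ∑ k, ‖V (V (e k))‖ ^ 2 + ∑ i, ν i * ‖V (V (x i))‖ := by
        simp_rw [hparseval, sq ‖V (V (x _))‖, mul_self_div_self]
  rw [htrace]
  exact le_add_of_nonneg_left (by positivity)

end IsInfoRoot

variable [FiniteDimensional ℝ E]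

theorem exists_isPositive_mul_self_eq {T : E →ₗ[ℝ] E} (hT : T.IsPositive) :
    ∃ S : E →ₗ[ℝ] E, S.IsPositive ∧ S * S = T := by
  let e := hT.isSymmetric.eigenvectorBasis rfl
  let ev := hT.isSymmetric.eigenvalues rfl
  let S : E →ₗ[ℝ] E := ∑ k, √(ev k) • (InnerProductSpace.rankOne ℝ (e k) (e k) : E →ₗ[ℝ] E)
  have hS (k) : S (e k) = √(ev k) • e k := by
    simp [S, InnerProductSpace.rankOne_apply, e.inner_eq_ite]
  refine ⟨S, LinearMap.isPositive_sum _ fun k _ =>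
    ((InnerProductSpace.isPositive_rankOne_self (e k)).toLinearMap).smul_of_nonneg
      (Real.sqrt_nonneg _), e.toBasis.ext fun k => ?_⟩
  rw [e.coe_toBasis, Module.End.mul_apply, hS, map_smul, hS, smul_smul,
    Real.mul_self_sqrt (hT.nonneg_eigenvalues rfl k)]
  exact (hT.isSymmetric.apply_eigenvectorBasis rfl k).symm

theorem exists_isInfoRoot (hlam : lam ≠ 0) (hν : ∀ i, 0 ≤ ν i) (x : ι → E) :
    ∃ V, IsInfoRoot lam ν x V := by
  obtain ⟨w, hw, hfix⟩ := exists_eq_div_sqrt_leverage hlam hν x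
  obtain ⟨U, hU, hUU⟩ := exists_isPositive_mul_self_eq
    (isPositive_inverse_ridgeMoment (x := x) hlam hw)
  obtain ⟨V, hV, rfl⟩ := exists_isPositive_mul_self_eq hU
  have hUTU : V * V * ridgeMoment lam w x * (V * V) = 1 :=
    mul_eq_one_comm.1 (by
      rw [← mul_assoc, hUU, Ring.inverse_mul_cancel _ (isUnit_ridgeMoment hlam hw)])
  have hnorm (i : ι) : ‖V (V (x i))‖ = √(leverage lam w x (x i)) := by
    rw [leverage, ← hUU, Module.End.mul_apply, hU.isSymmetric, Module.End.mul_apply,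
      real_inner_self_eq_norm_sq, Real.sqrt_sq (norm_nonneg _)]
  refine ⟨V, hV.isSymmetric, fun v => ?_⟩
  have hv : ‖v‖ ^ 2 = ⟪ridgeMoment lam w x (V (V v)), V (V v)⟫ := by
    rw [← Module.End.mul_apply V V, ← hU.isSymmetric, ← real_inner_self_eq_norm_sq]
    exact congrArg (⟪·, v⟫) (LinearMap.congr_fun hUTU v).symm
  rw [hv, inner_ridgeMoment_self]
  congr 1
  refine Finset.sum_congr rfl fun i _ => ?_
  rcases eq_or_ne (x i) 0 with hx | hx
  · simp [hx]
  · rw [hnorm, hfix i hx]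
    ring

end InformationMatrix

section SymmetricRoot

variable {E : Type*} [NormedAddCommGroup E] [InnerProductSpace ℝ E] {V : E →ₗ[ℝ] E}

theorem norm_apply_sq_le_of_isSymmetric (hV : V.IsSymmetric) (v : E) :
    ‖V v‖ ^ 2 ≤ ‖v‖ * ‖V (V v)‖ := by
  rw [← real_inner_self_eq_norm_sq, hV]
  exact real_inner_le_norm _ _

theorem inner_apply_apply_div_norm (hV : V.IsSymmetric) (a z : E) :
    ⟪V (V a), z⟫ / ‖V (V z)‖ = ⟪a, normalize (V (V z))⟫ := by
  rw [hV, hV, NormedSpace.normalize, real_inner_smul_right, div_eq_inv_mul]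

theorem inner_apply_apply_sq_div_norm (hV : V.IsSymmetric) (a z : E) :
    ⟪V (V a), z⟫ ^ 2 / ‖V (V z)‖ =
      ‖V z‖ ^ 2 / ‖V (V z)‖ * ⟪V a, normalize (V z)⟫ ^ 2 := by
  have hnorm : ⟪V (V a), z⟫ = ‖V z‖ * ⟪V a, normalize (V z)⟫ := by
    rw [hV, ← real_inner_smul_right, norm_smul_normalize]
  rw [hnorm, mul_pow, div_mul_eq_mul_div]

variable {ι : Type*} [Fintype ι] [FiniteDimensional ℝ E] [MeasurableSpace E] [BorelSpace E]

theorem sq_sum_mul_inner_div_norm_le (hV : V.IsSymmetric) (b : ι → ℝ) (x : ι → E) (a : E) :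
    (∑ i, b i * (⟪V (V a), x i⟫ / ‖V (V (x i))‖)) ^ 2 ≤ ‖a‖ ^ 2 * (Real.exp 1 *
      ∫ g, (∑ i, b i * Real.sin ⟪g, normalize (V (V (x i)))⟫) ^ 2 ∂(stdGaussian E)) := by
  simp_rw [inner_apply_apply_div_norm hV]
  exact sq_sum_mul_inner_normalize_le b (fun i => V (V (x i))) a

theorem sq_sum_mul_inner_sq_div_norm_le (hV : V.IsSymmetric) (b : ι → ℝ) (x : ι → E) (a : E) :
    (∑ i, b i * (⟪V (V a), x i⟫ ^ 2 / ‖V (V (x i))‖)) ^ 2 ≤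
      (‖a‖ * ‖V (V a)‖) ^ 2 * (2 * Real.exp 1 * ∫ g, (∑ i, b i * (‖V (x i)‖ ^ 2 / ‖V (V (x i))‖ *
        Real.cos ⟪g, normalize (V (x i))⟫)) ^ 2 ∂(stdGaussian E)) := by
  simp_rw [inner_apply_apply_sq_div_norm hV, ← mul_assoc (b _)]
  refine (sq_sum_mul_inner_normalize_sq_le _ (fun i => V (x i)) (V a)).trans ?_
  refine mul_le_mul_of_nonneg_right ?_ ?_
  · rw [show ‖V a‖ ^ 4 = (‖V a‖ ^ 2) ^ 2 by ring]
    gcongr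
    exact norm_apply_sq_le_of_isSymmetric hV a
  · exact mul_nonneg (by positivity) (integral_nonneg fun g => sq_nonneg _)

end SymmetricRoot

section LeastSquares

variable {E : Type*} [NormedAddCommGroup E] [InnerProductSpace ℝ E]

theorem exists_sum_mul_sub_inner_mul_inner_sub_nonpos {ι : Type*} [Fintype ι] {K : Set E}
    (hne : K.Nonempty) (hcompact : IsCompact K) (hconvex : Convex ℝ K) {w : ι → ℝ}
    (hw : ∀ i, 0 ≤ w i) (y : ι → ℝ) (x : ι → E) :
    ∃ t ∈ K, ∀ θ ∈ K, ∑ i, w i * (y i - ⟪t, x i⟫) * ⟪θ - t, x i⟫ ≤ 0 := by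
  let A : E →L[ℝ] EuclideanSpace ℝ ι := (EuclideanSpace.equiv ι ℝ).symm.toContinuousLinearMap ∘L
    ContinuousLinearMap.pi fun i => √(w i) • innerSL ℝ (x i)
  let yw : EuclideanSpace ℝ ι := WithLp.toLp 2 fun i => √(w i) * y i
  have hAconvex : Convex ℝ (A '' K) := hconvex.linear_image A.toLinearMap
  obtain ⟨_, ⟨t, ht, rfl⟩, hmin⟩ := exists_norm_eq_iInf_of_complete_convex (hne.image A)
    (hcompact.image A.continuous).isComplete hAconvex yw
  refine ⟨t, ht, fun θ hθ => ?_⟩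
  have hle := (norm_eq_iInf_iff_real_inner_le_zero hAconvex ⟨t, ht, rfl⟩).1 hmin _ ⟨θ, hθ, rfl⟩
  rw [← map_sub, PiLp.inner_apply] at hle
  refine le_of_eq_of_le (Finset.sum_congr rfl fun i _ => ?_) hle
  have hterm : ⟪(yw - A t) i, A (θ - t) i⟫ =
      √(w i) * √(w i) * (y i - ⟪t, x i⟫) * ⟪θ - t, x i⟫ := by
    simp only [A, yw, ContinuousLinearMap.comp_apply, ContinuousLinearMap.coe_pi', smul_apply,
      coe_innerSL_apply, smul_eq_mul, ContinuousLinearEquiv.coe_coe,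
      PiLp.continuousLinearEquiv_symm_apply, PiLp.sub_apply, RCLike.inner_apply,
      Real.ringHom_apply, real_inner_comm (x i)]
    ring
  rw [hterm, Real.mul_self_sqrt (hw i)]

end LeastSquares

section LinearTests

variable {E : Type*} [NormedAddCommGroup E] [InnerProductSpace ℝ E] {lam : ℝ} {V : E →ₗ[ℝ] E}
  {t : E}

/-- The three statistics, with values in `[-1, 1]`, that are tested on a labelled point `(x, y)`
with a Gaussian vector `g`. With `U = V²` the information matrix, they probe the residuals of the
regressor `t` in direction `U x`, the second moment weighted by `‖U x‖⁻¹`, and the mean of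
`‖U x‖`. -/
noncomputable def linTest (lam : ℝ) (V : E →ₗ[ℝ] E) (t : E) (j : Fin 3) (g x : E) (y : ℝ) : ℝ :=
  ![(y - ⟪t, x⟫) / 2 * Real.sin ⟪g, normalize (V (V x))⟫,
    ‖V x‖ ^ 2 / ‖V (V x)‖ * Real.cos ⟪g, normalize (V x)⟫,
    lam * ‖V (V x)‖] j

theorem continuous_linTest (j : Fin 3) (x : E) (y : ℝ) :
    Continuous fun g => linTest lam V t j g x y := by
  fin_cases j <;>
    simp only [linTest, Fin.zero_eta, Fin.mk_one, Fin.reduceFinMk, Matrix.cons_val] <;> fun_prop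

theorem abs_real_inner_le_one {θ x : E} (hθ : ‖θ‖ ≤ 1) (hx : ‖x‖ ≤ 1) : |⟪θ, x⟫| ≤ 1 :=
  (abs_real_inner_le_norm θ x).trans (mul_le_one₀ hθ (norm_nonneg _) hx)

theorem IsInfoRoot.abs_linTest_le_one {Z : Type*} [Fintype Z] {q : Z → ℝ} {z : Z → E}
    (hV : IsInfoRoot lam q z V) (hq : ∀ i, 0 ≤ q i) (hlam : 0 ≤ lam) (ht : ‖t‖ ≤ 1) (j : Fin 3)
    (g : E) {x : E} (hx : ‖x‖ ≤ 1) {y : ℝ} (hy : |y| ≤ 1) : |linTest lam V t j g x y| ≤ 1 := by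
  fin_cases j
  · have hres : |(y - ⟪t, x⟫) / 2| ≤ 1 := by
      rw [abs_div, abs_two, div_le_one two_pos]
      linarith [abs_sub y ⟪t, x⟫, abs_real_inner_le_one ht hx]
    change |(y - ⟪t, x⟫) / 2 * Real.sin _| ≤ 1
    rw [abs_mul]
    exact mul_le_one₀ hres (abs_nonneg _) (Real.abs_sin_le_one _)
  · have hratio : ‖V x‖ ^ 2 / ‖V (V x)‖ ≤ 1 := by
      refine div_le_of_le_mul₀ (norm_nonneg _) zero_le_one ?_
      exact (norm_apply_sq_le_of_isSymmetric hV.isSymmetric x).trans (by gcongr)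
    change |‖V x‖ ^ 2 / ‖V (V x)‖ * Real.cos _| ≤ 1
    rw [abs_mul, abs_of_nonneg (by positivity : 0 ≤ ‖V x‖ ^ 2 / ‖V (V x)‖)]
    exact mul_le_one₀ hratio (abs_nonneg _) (Real.abs_cos_le_one _)
  · change |lam * ‖V (V x)‖| ≤ 1
    rw [abs_of_nonneg (by positivity)]
    exact (hV.mul_norm_apply_apply_le hq x).trans hx

variable [FiniteDimensional ℝ E] [MeasurableSpace E] [BorelSpace E]
  {Z : Type*} [Fintype Z] {p q : Z → ℝ} {x : Z → E} {y : Z → ℝ} {θ a : E} {τ : ℝ}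

theorem sum_mul_inner_sq_div_norm_le (hV : V.IsSymmetric) (hτ : 0 ≤ τ) (ha : V (V a) = θ - t)
    (hp : ∀ φ : E → ℝ, ∑ z, p z * (y z - ⟪θ, x z⟫) * φ (x z) = 0)
    (ht : ∑ z, q z / ‖V (V (x z))‖ * (y z - ⟪t, x z⟫) * ⟪θ - t, x z⟫ ≤ 0)
    (hint : ∫ g, (∑ z, (p z - q z) * linTest lam V t 0 g (x z) (y z)) ^ 2 ∂(stdGaussian E) ≤
      12 * τ ^ 2) :
    ∑ z, p z * (⟪V (V a), x z⟫ ^ 2 / ‖V (V (x z))‖) ≤ 12 * ‖a‖ * τ := by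
  have hbound : (∑ z, (p z - q z) * ((y z - ⟪t, x z⟫) / 2) *
      (⟪V (V a), x z⟫ / ‖V (V (x z))‖)) ^ 2 ≤ (6 * ‖a‖ * τ) ^ 2 := by
    simp only [linTest, Matrix.cons_val_zero, ← mul_assoc] at hint
    refine (sq_sum_mul_inner_div_norm_le hV _ x a).trans ?_
    calc _ ≤ ‖a‖ ^ 2 * (3 * (12 * τ ^ 2)) := by
          gcongr
          exact Real.exp_one_lt_three.le
      _ = (6 * ‖a‖ * τ) ^ 2 := by ring
  have hsplit : ∑ z, p z * (⟪V (V a), x z⟫ ^ 2 / ‖V (V (x z))‖) =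
      2 * ∑ z, (p z - q z) * ((y z - ⟪t, x z⟫) / 2) * (⟪V (V a), x z⟫ / ‖V (V (x z))‖) +
      ∑ z, q z / ‖V (V (x z))‖ * (y z - ⟪t, x z⟫) * ⟪θ - t, x z⟫ -
      ∑ z, p z * (y z - ⟪θ, x z⟫) * (⟪V (V a), x z⟫ / ‖V (V (x z))‖) := by
    rw [Finset.mul_sum, ← Finset.sum_add_distrib, ← Finset.sum_sub_distrib]
    refine Finset.sum_congr rfl fun z _ => ?_
    rw [ha, inner_sub_left]
    ring
  rw [hsplit, hp fun v => ⟪V (V a), v⟫ / ‖V (V v)‖]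
  linarith [(abs_le_of_sq_le_sq' hbound (by positivity)).2]

theorem sum_mul_inner_sq_div_norm_sub_le (hV : V.IsSymmetric) (hτ : 0 ≤ τ) (ha : ‖V (V a)‖ ≤ 2)
    (hint : ∫ g, (∑ z, (p z - q z) * linTest lam V t 1 g (x z) (y z)) ^ 2 ∂(stdGaussian E) ≤
      12 * τ ^ 2) :
    ∑ z, q z * (⟪V (V a), x z⟫ ^ 2 / ‖V (V (x z))‖) -
      ∑ z, p z * (⟪V (V a), x z⟫ ^ 2 / ‖V (V (x z))‖) ≤ 17 * ‖a‖ * τ := by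
  have hbound : (∑ z, (p z - q z) * (⟪V (V a), x z⟫ ^ 2 / ‖V (V (x z))‖)) ^ 2 ≤
      (17 * ‖a‖ * τ) ^ 2 := by
    simp only [linTest, Matrix.cons_val_one, Matrix.cons_val_zero] at hint
    refine (sq_sum_mul_inner_sq_div_norm_le hV _ x a).trans ?_
    calc _ ≤ (‖a‖ * 2) ^ 2 * (2 * 3 * (12 * τ ^ 2)) := by
          gcongr
          exact Real.exp_one_lt_three.le
      _ ≤ (17 * ‖a‖ * τ) ^ 2 := by nlinarith [sq_nonneg (‖a‖ * τ)]
  have hge := (abs_le_of_sq_le_sq' hbound (by positivity)).1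
  simp only [sub_mul, Finset.sum_sub_distrib] at hge
  linarith

theorem IsInfoRoot.mul_sum_mul_norm_le (hV : IsInfoRoot lam q x V) (hlam : 0 ≤ lam) (hτ : 0 ≤ τ)
    (hint : ∫ g, (∑ z, (p z - q z) * linTest lam V t 2 g (x z) (y z)) ^ 2 ∂(stdGaussian E) ≤
      12 * τ ^ 2) :
    lam * ∑ z, p z * ‖V (V (x z))‖ ≤ lam * Module.finrank ℝ E + 4 * τ := by
  have hbound : (∑ z, (p z - q z) * (lam * ‖V (V (x z))‖)) ^ 2 ≤ (4 * τ) ^ 2 := by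
    simp only [linTest, Matrix.cons_val, integral_const, probReal_univ, one_smul] at hint
    nlinarith [sq_nonneg τ]
  have hle := (abs_le_of_sq_le_sq' hbound (by positivity)).2
  have htrace := mul_le_mul_of_nonneg_left hV.sum_mul_norm_apply_apply_le hlam
  simp only [sub_mul, Finset.sum_sub_distrib, mul_left_comm _ lam, ← Finset.mul_sum] at hle
  linarith

end LinearTests

theorem abs_le_mul_add_sq_div_mul {lam r s : ℝ} (hlam : 0 < lam) (hr : 0 < r) :
    |s| ≤ (lam * r + s ^ 2 / r / lam) / 2 := by
  have hsq : 0 ≤ (lam * r - |s|) ^ 2 / (lam * r) := by positivity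
  rw [← sq_abs s]
  field_simp at hsq ⊢
  linarith

theorem half_add_div_le_of_sq_le {d lam P Q τ : ℝ} (hd : 1 ≤ d) (hlam : 0 < lam) (hP : 0 ≤ P)
    (hτ : 0 ≤ τ) (hQ : Q ≤ 12 * P * τ) (hPsq : P ^ 2 ≤ 4 * lam ^ 2 + 29 * P * τ) {R : ℝ}
    (hR : R ≤ lam * d + 4 * τ) : (R + Q / lam) / 2 ≤ 8 * d * lam + 181 * τ ^ 2 / lam := by
  have hPle : P ≤ 29 * τ + 2 * lam := by nlinarith
  have hQle : Q ≤ 348 * τ ^ 2 + 24 * lam * τ := by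
    linarith [mul_le_mul_of_nonneg_right hPle hτ]
  have hdiv : Q / lam ≤ 348 * (τ ^ 2 / lam) + 24 * τ := by
    rw [div_le_iff₀ hlam]
    field_simp
    linarith
  have hamgm := abs_le_mul_add_sq_div_mul (s := τ) hlam one_pos
  rw [abs_of_nonneg hτ, div_one, mul_one] at hamgm
  rw [mul_div_assoc]
  nlinarith

section LossBound

variable {E : Type*} [NormedAddCommGroup E] [InnerProductSpace ℝ E] {Z : Type*} [Fintype Z]
  {p q : Z → ℝ} {x : Z → E} {y : Z → ℝ} {lam τ : ℝ} {V : E →ₗ[ℝ] E} {t θ : E}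

theorem IsInfoRoot.abs_inner_le (hV : IsInfoRoot lam q x V) (hlam : 0 < lam) (v z : E) :
    |⟪v, z⟫| ≤ (lam * ‖V (V z)‖ + ⟪v, z⟫ ^ 2 / ‖V (V z)‖ / lam) / 2 := by
  rcases eq_or_ne z 0 with rfl | hz
  · simp
  · exact abs_le_mul_add_sq_div_mul hlam <| norm_pos_iff.2 <|
      (map_ne_zero_iff (V * V) hV.apply_apply_injective).2 hz

variable [FiniteDimensional ℝ E] [MeasurableSpace E] [BorelSpace E]

theorem IsInfoRoot.sum_mul_abs_inner_sub_le (hV : IsInfoRoot lam q x V) (hlam : 0 < lam)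
    (hτ : 0 ≤ τ) (hE : 1 ≤ Module.finrank ℝ E) (ht : ‖t‖ ≤ 1) (hθ : ‖θ‖ ≤ 1) (hp : ∀ z, 0 ≤ p z)
    (hmoment : ∀ φ : E → ℝ, ∑ z, p z * (y z - ⟪θ, x z⟫) * φ (x z) = 0)
    (hopt : ∑ z, q z / ‖V (V (x z))‖ * (y z - ⟪t, x z⟫) * ⟪θ - t, x z⟫ ≤ 0)
    (hint : ∀ j, ∫ g, (∑ z, (p z - q z) * linTest lam V t j g (x z) (y z)) ^ 2
      ∂(stdGaussian E) ≤ 12 * τ ^ 2) :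
    ∑ z, p z * |⟪θ - t, x z⟫| ≤ 8 * Module.finrank ℝ E * lam + 181 * τ ^ 2 / lam := by
  obtain ⟨a, ha⟩ := hV.exists_apply_apply_eq (θ - t)
  have hnorm : ‖V (V a)‖ ≤ 2 := by
    rw [ha]
    linarith [norm_sub_le θ t]
  have hQ := sum_mul_inner_sq_div_norm_le hV.isSymmetric hτ ha hmoment hopt (hint 0)
  have hQQ := sum_mul_inner_sq_div_norm_sub_le hV.isSymmetric hτ hnorm (hint 1)
  have hR := hV.mul_sum_mul_norm_le hlam.le hτ (hint 2)
  have hPsq : ‖a‖ ^ 2 ≤ 4 * lam ^ 2 + 29 * ‖a‖ * τ := by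
    have hlamsq : lam ^ 2 * ‖V (V a)‖ ^ 2 ≤ lam ^ 2 * 2 ^ 2 := by gcongr
    rw [hV.norm_sq_eq a]
    linarith
  calc ∑ z, p z * |⟪θ - t, x z⟫|
      ≤ ∑ z, p z * ((lam * ‖V (V (x z))‖ + ⟪V (V a), x z⟫ ^ 2 / ‖V (V (x z))‖ / lam) / 2) := by
        rw [ha]
        gcongr with z
        · exact hp z
        · exact hV.abs_inner_le hlam _ _
    _ = (lam * ∑ z, p z * ‖V (V (x z))‖ +
          (∑ z, p z * (⟪V (V a), x z⟫ ^ 2 / ‖V (V (x z))‖)) / lam) / 2 := by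
        rw [Finset.mul_sum, Finset.sum_div, ← Finset.sum_add_distrib, Finset.sum_div]
        exact Finset.sum_congr rfl fun z _ => by ring
    _ ≤ 8 * Module.finrank ℝ E * lam + 181 * τ ^ 2 / lam :=
        half_add_div_le_of_sq_le (by exact_mod_cast hE) hlam (norm_nonneg a) hτ hQ hPsq hR

end LossBound

section TestDistributions

variable {J Ω Θ Z : Type*} [MeasurableSpace J] [MeasurableSpace Ω] [MeasurableSpace Θ]

theorem integral_uniformOn_prod [Fintype J] [MeasurableSingletonClass J] {μ : Measure Ω} [SFinite μ]
    {f : J × Ω → ℝ} (hf : Measurable f) (hint : ∀ j, Integrable (fun ω => f (j, ω)) μ) :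
    ∫ jω, f jω ∂((uniformOn Set.univ).prod μ) = (∑ j, ∫ ω, f (j, ω) ∂μ) / Fintype.card J := by
  have hf_int : Integrable f ((uniformOn Set.univ).prod μ) :=
    (integrable_prod_iff hf.aestronglyMeasurable).2 ⟨.of_forall hint, .of_finite⟩
  rw [integral_prod _ hf_int, integral_fintype .of_finite, Finset.sum_div]
  refine Finset.sum_congr rfl fun j _ => ?_
  simp [Measure.real, uniformOn_univ, div_eq_inv_mul]

theorem integrable_sq_sum_mul_of_abs_le_one [Fintype Z] {μ : Measure Ω} [IsFiniteMeasure μ]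
    {h : Ω → Z → ℝ} (hmeas : Measurable h) (hle : ∀ ω z, |h ω z| ≤ 1) (b : Z → ℝ) :
    Integrable (fun ω => (∑ z, b z * h ω z) ^ 2) μ := by
  refine .of_bound (Measurable.aestronglyMeasurable (by fun_prop)) ((∑ z, |b z|) ^ 2)
    (ae_of_all _ fun ω => ?_)
  rw [Real.norm_eq_abs, abs_pow]
  gcongr
  refine (Finset.abs_sum_le_sum_abs _ _).trans (Finset.sum_le_sum fun z _ => ?_)
  rw [abs_mul]
  exact mul_le_of_le_one_right (abs_nonneg _) (hle ω z)

theorem Dl_sq_eq_sq_sum [MeasurableSpace Z] [MeasurableSingletonClass Z] [Fintype Z] (ℓ : Z → ℝ)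
    (P Q : Measure Z) [IsFiniteMeasure P] [IsFiniteMeasure Q] :
    Dl ℓ P Q ^ 2 = (∑ z, (P.real {z} - Q.real {z}) * ℓ z) ^ 2 := by
  rw [Dl, sq_abs, integral_fintype .of_finite, integral_fintype .of_finite]
  simp only [smul_eq_mul, sub_mul, Finset.sum_sub_distrib]

theorem Dl_one_add_div_two_sq [MeasurableSpace Z] [MeasurableSingletonClass Z] [Fintype Z]
    (f : Z → ℝ) (P Q : Measure Z) [IsProbabilityMeasure P] [IsProbabilityMeasure Q] :
    Dl (fun z => (1 + f z) / 2) P Q ^ 2 = (∑ z, (P.real {z} - Q.real {z}) * f z) ^ 2 / 4 := by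
  have hmass : ∑ z, (P.real {z} - Q.real {z}) = 0 := by simp
  have hsum : ∑ z, (P.real {z} - Q.real {z}) * ((1 + f z) / 2) =
      (∑ z, (P.real {z} - Q.real {z}) * f z) / 2 := by
    simp_rw [mul_div_assoc', ← Finset.sum_div, mul_one_add, Finset.sum_add_distrib, hmass, zero_add]
  rw [Dl_sq_eq_sq_sum, hsum, div_pow]
  norm_num

/-- The joint distribution of the fixed decision `t` and the test `(1 + h j ω) / 2`, where `j` is
uniform on `J` and `ω ∼ μ` independently. The rescaling takes statistics with values in `[-1, 1]` to
tests with values in `[0, 1]`. -/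
noncomputable def testDist (μ : Measure Ω) (t : Θ) (h : J → Ω → Z → ℝ) :
    Measure (Θ × (Z → ℝ)) :=
  ((uniformOn Set.univ).prod μ).map fun jω => (t, fun z => (1 + h jω.1 jω.2 z) / 2)

variable [MeasurableSingletonClass J] {μ : Measure Ω} {t : Θ} {h : J → Ω → Z → ℝ}

theorem measurable_testDist_map [Countable J] (hmeas : ∀ j, Measurable (h j)) :
    Measurable fun jω : J × Ω => (t, fun z => (1 + h jω.1 jω.2 z) / 2) := by
  have : Measurable fun jω : J × Ω => h jω.1 jω.2 := measurable_from_prod_countable_right hmeas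
  fun_prop

variable [MeasurableSpace Z] [MeasurableSingletonClass Z] [IsProbabilityMeasure μ]

theorem isTestDist_testDist [Finite J] [Nonempty J] [Finite Z] (hmeas : ∀ j, Measurable (h j))
    (hle : ∀ j ω z, |h j ω z| ≤ 1) : IsTestDist (testDist μ t h) := by
  have : IsProbabilityMeasure (uniformOn (Set.univ : Set J)) :=
    isProbabilityMeasure_uniformOn Set.finite_univ Set.univ_nonempty
  have hmap := (measurable_testDist_map (t := t) hmeas).aemeasurable (μ := (uniformOn .univ).prod μ)
  have hprob : IsProbabilityMeasure (testDist μ t h) := Measure.isProbabilityMeasure_map hmap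
  have hmem : MeasurableSet {pl : Θ × (Z → ℝ) | ∀ z, pl.2 z ∈ Set.Icc (0 : ℝ) 1} := by
    simp_rw [Set.ofPred_forall]
    exact .iInter fun z => measurableSet_Icc.preimage (by fun_prop)
  refine ⟨hprob, ?_⟩
  simp only [measurable_of_finite, true_and]
  rw [← mem_ae_iff_prob_eq_one hmem, testDist, mem_ae_map_iff hmap hmem]
  refine ae_of_all _ fun jω z => ?_
  have hjω := abs_le.1 (hle jω.1 jω.2 z)
  exact ⟨by linarith, by linarith⟩

theorem integral_Dl_sq_testDist [Fintype J] [Fintype Z] (hmeas : ∀ j, Measurable (h j))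
    (hle : ∀ j ω z, |h j ω z| ≤ 1) (P Q : Measure Z) [IsProbabilityMeasure P]
    [IsProbabilityMeasure Q] :
    ∫ pl, Dl pl.2 P Q ^ 2 ∂(testDist μ t h) =
      (∑ j, ∫ ω, (∑ z, (P.real {z} - Q.real {z}) * h j ω z) ^ 2 ∂μ) / (4 * Fintype.card J) := by
  have hjoint : Measurable fun jω : J × Ω => h jω.1 jω.2 :=
    measurable_from_prod_countable_right hmeas
  have hDl : Measurable fun pl : Θ × (Z → ℝ) => Dl pl.2 P Q ^ 2 := by
    simp_rw [Dl_sq_eq_sq_sum]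
    fun_prop
  rw [testDist, integral_map (measurable_testDist_map hmeas).aemeasurable hDl.aestronglyMeasurable]
  simp_rw [Dl_one_add_div_two_sq]
  rw [integral_div, integral_uniformOn_prod (by fun_prop) fun j =>
    integrable_sq_sum_mul_of_abs_le_one (hmeas j) (hle j) _, div_div, mul_comm (4 : ℝ)]

theorem integral_sq_sum_le_integral_Dl_sq_testDist [Fintype J] [Fintype Z]
    (hmeas : ∀ j, Measurable (h j)) (hle : ∀ j ω z, |h j ω z| ≤ 1) (t : Θ) (P Q : Measure Z)
    [IsProbabilityMeasure P] [IsProbabilityMeasure Q] (j : J) :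
    ∫ ω, (∑ z, (P.real {z} - Q.real {z}) * h j ω z) ^ 2 ∂μ ≤
      4 * Fintype.card J * ∫ pl, Dl pl.2 P Q ^ 2 ∂(testDist μ t h) := by
  have : Nonempty J := ⟨j⟩
  rw [integral_Dl_sq_testDist hmeas hle, mul_div_cancel₀ _ (by positivity)]
  exact Finset.single_le_sum (f := fun j => ∫ ω, (∑ z, (P.real {z} - Q.real {z}) * h j ω z) ^ 2 ∂μ)
    (fun i _ => integral_nonneg fun ω => sq_nonneg _) (Finset.mem_univ j)

end TestDistributions

section DecisionEstimation

variable {Θ Z ι : Type*} [MeasurableSpace Θ] [MeasurableSpace Z] {Ms : ι → Θ → Measure Z}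
  {loss : ι → Θ → ℝ} {Mb : Θ → Measure Z} {γ : ℝ}

theorem pdecOffLDP_le_of_forall_loss_le [MeasurableSingletonClass Θ] {q : Measure (Θ × (Z → ℝ))}
    (hq : IsTestDist q) {t : Θ} {B : ℝ} (hB : ∀ i, loss i t ≤ B + γ * testErr Ms Mb q i) :
    pdecOffLDP Ms loss Mb γ ≤ B := by
  refine iInf₂_le_of_le ⟨Measure.dirac t, inferInstance⟩ ⟨q, hq⟩ (iSup_le fun i => ?_)
  rw [EReal.coe_le_coe_iff, integral_dirac]
  linarith [hB i]

theorem pdecLDP_le_pdecOffLDP_add (hγ : 0 ≤ γ) (ε : ℝ) :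
    pdecLDP Ms loss Mb ε ≤ pdecOffLDP Ms loss Mb γ + (γ * ε ^ 2 : ℝ) := by
  have hsub {a b : EReal} : a - (γ * ε ^ 2 : ℝ) ≤ b ↔ a ≤ b + (γ * ε ^ 2 : ℝ) :=
    EReal.sub_le_iff_le_add (.inl (EReal.coe_ne_bot _)) (.inl (EReal.coe_ne_top _))
  rw [← hsub]
  refine le_iInf₂ fun p q => ?_
  rw [hsub]
  refine iInf₂_le_of_le p q (sSup_le ?_)
  rintro _ ⟨i, hi, rfl⟩
  refine le_trans ?_ (add_le_add_left (le_iSup _ i) _)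
  rw [← EReal.coe_add, EReal.coe_le_coe_iff]
  linarith [mul_le_mul_of_nonneg_left hi hγ]

end DecisionEstimation

section LinearModel

variable {d : ℕ} {X : Finset (EuclideanSpace ℝ (Fin d))} {ν : Measure {x // x ∈ X}}
  {θ : EuclideanSpace ℝ (Fin d)}

/-- The label in `{-1, 1}` encoded by a Boolean, as in `linModel`. -/
def label (y : Bool) : ℝ := if y then 1 else -1

theorem abs_label (y : Bool) : |label y| = 1 := by
  cases y <;> simp [label]

theorem integral_linModel [IsFiniteMeasure ν] (hX : ∀ x ∈ X, ‖x‖ ≤ 1) (hθ : ‖θ‖ ≤ 1)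
    (f : {x // x ∈ X} × Bool → ℝ) :
    ∫ z, f z ∂(linModel X ν θ) = ∑ x : {x // x ∈ X}, ν.real {x} *
      ((1 + ⟪θ, x.1⟫) / 2 * f (x, true) + (1 - ⟪θ, x.1⟫) / 2 * f (x, false)) := by
  have hdirac (c : ℝ) (z : {x // x ∈ X} × Bool) :
      Integrable f (ENNReal.ofReal c • Measure.dirac z) :=
    (integrable_dirac (by finiteness)).smul_measure ENNReal.ofReal_ne_top
  rw [linModel, integral_finsetSum_measure fun x _ =>
    ((hdirac _ _).add_measure (hdirac _ _)).smul_measure (measure_ne_top _ _)]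
  refine Finset.sum_congr rfl fun x _ => ?_
  have hinner := abs_le.1 (abs_real_inner_le_one hθ (hX x.1 x.2))
  rw [integral_smul_measure, integral_add_measure (hdirac _ _) (hdirac _ _), integral_smul_measure,
    integral_smul_measure, integral_dirac, integral_dirac, ENNReal.toReal_ofReal (by linarith),
    ENNReal.toReal_ofReal (by linarith)]
  simp only [smul_eq_mul, Measure.real]

theorem isProbabilityMeasure_linModel [IsProbabilityMeasure ν] (hX : ∀ x ∈ X, ‖x‖ ≤ 1)
    (hθ : ‖θ‖ ≤ 1) : IsProbabilityMeasure (linModel X ν θ) := by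
  refine ⟨?_⟩
  have hmass (x : {x // x ∈ X}) : ENNReal.ofReal ((1 + ⟪θ, x.1⟫) / 2) +
      ENNReal.ofReal ((1 - ⟪θ, x.1⟫) / 2) = 1 := by
    have hinner := abs_le.1 (abs_real_inner_le_one hθ (hX x.1 x.2))
    rw [← ENNReal.ofReal_add (by linarith) (by linarith), ← add_div]
    norm_num
  simp [linModel, Measure.finsetSum_apply, hmass, -smul_add]

theorem isProbabilityMeasure_of_mem_coLin (hX : ∀ x ∈ X, ‖x‖ ≤ 1)
    {Mb : Measure ({x // x ∈ X} × Bool)} (hMb : Mb ∈ coLin X) : IsProbabilityMeasure Mb := by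
  obtain ⟨n, w, ν, θ, hw, hw1, hν, hθ, rfl⟩ := hMb
  have hprob (k : Fin n) : IsProbabilityMeasure (linModel X (ν k) (θ k)) :=
    have := hν k
    isProbabilityMeasure_linModel hX (hθ k)
  refine ⟨?_⟩
  simp [Measure.finsetSum_apply, ← ENNReal.ofReal_sum_of_nonneg fun k _ => hw k, hw1]

variable [IsProbabilityMeasure ν]

theorem sum_linModel_real_mul (hX : ∀ x ∈ X, ‖x‖ ≤ 1) (hθ : ‖θ‖ ≤ 1)
    (f : {x // x ∈ X} × Bool → ℝ) :
    ∑ z, (linModel X ν θ).real {z} * f z = ∑ x : {x // x ∈ X}, ν.real {x} *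
      ((1 + ⟪θ, x.1⟫) / 2 * f (x, true) + (1 - ⟪θ, x.1⟫) / 2 * f (x, false)) := by
  have := isProbabilityMeasure_linModel (ν := ν) hX hθ
  rw [← integral_linModel hX hθ, integral_fintype .of_finite]
  rfl

theorem sum_linModel_real_mul_label_sub_inner (hX : ∀ x ∈ X, ‖x‖ ≤ 1) (hθ : ‖θ‖ ≤ 1)
    (φ : EuclideanSpace ℝ (Fin d) → ℝ) :
    ∑ z, (linModel X ν θ).real {z} * (label z.2 - ⟪θ, z.1.1⟫) * φ z.1 = 0 := by
  simp_rw [mul_assoc]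
  rw [sum_linModel_real_mul hX hθ]
  refine Finset.sum_eq_zero fun x _ => ?_
  simp only [label, if_true, Bool.false_eq_true, if_false]
  ring

theorem linLossL1_eq_sum (hX : ∀ x ∈ X, ‖x‖ ≤ 1) (hθ : ‖θ‖ ≤ 1)
    (t : {θ : EuclideanSpace ℝ (Fin d) // ‖θ‖ ≤ 1}) :
    linLossL1 X (⟨ν, inferInstance⟩, ⟨θ, hθ⟩) t =
      ∑ z, (linModel X ν θ).real {z} * |⟪θ - t, z.1.1⟫| := by
  rw [sum_linModel_real_mul hX hθ, linLossL1]
  refine Finset.sum_congr rfl fun x _ => ?_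
  rw [real_inner_comm, ← abs_neg, ← inner_neg_left, neg_sub, Measure.real]
  ring

/-- The statistics `linTest` on `X × {-1, 1}`, with the labels encoded by Booleans. -/
noncomputable def labelledTest (lam : ℝ)
    (V : EuclideanSpace ℝ (Fin d) →ₗ[ℝ] EuclideanSpace ℝ (Fin d)) (t : EuclideanSpace ℝ (Fin d))
    (j : Fin 3) (g : EuclideanSpace ℝ (Fin d)) (z : {x // x ∈ X} × Bool) : ℝ :=
  linTest lam V t j g z.1.1 (label z.2)

variable {lam : ℝ} {V : EuclideanSpace ℝ (Fin d) →ₗ[ℝ] EuclideanSpace ℝ (Fin d)}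

theorem measurable_labelledTest (t : EuclideanSpace ℝ (Fin d)) (j : Fin 3) :
    Measurable (labelledTest (X := X) lam V t j) :=
  measurable_pi_iff.2 fun _ => (continuous_linTest j _ _).measurable

variable {Mb : Measure ({x // x ∈ X} × Bool)}

theorem IsInfoRoot.abs_labelledTest_le_one
    (hV : IsInfoRoot lam (fun z => Mb.real {z}) (fun z => z.1.1) V) (hX : ∀ x ∈ X, ‖x‖ ≤ 1)
    (hlam : 0 ≤ lam) {t : EuclideanSpace ℝ (Fin d)} (ht : ‖t‖ ≤ 1) (j : Fin 3)
    (g : EuclideanSpace ℝ (Fin d)) (z : {x // x ∈ X} × Bool) : |labelledTest lam V t j g z| ≤ 1 :=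
  hV.abs_linTest_le_one (fun _ => measureReal_nonneg) hlam ht j g (hX _ z.1.2) (abs_label _).le

variable [IsProbabilityMeasure Mb]

theorem IsInfoRoot.linLossL1_le (hV : IsInfoRoot lam (fun z => Mb.real {z}) (fun z => z.1.1) V)
    (hd : 1 ≤ d) (hX : ∀ x ∈ X, ‖x‖ ≤ 1) (hlam : 0 < lam)
    {t : {θ : EuclideanSpace ℝ (Fin d) // ‖θ‖ ≤ 1}}
    (hopt : ∀ θ, ‖θ‖ ≤ 1 → ∑ z : {x // x ∈ X} × Bool,
      Mb.real {z} / ‖V (V z.1.1)‖ * (label z.2 - ⟪t.1, z.1.1⟫) * ⟪θ - t.1, z.1.1⟫ ≤ 0) (i) :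
    linLossL1 X i t ≤ 8 * d * lam + 181 * testErr (linMs X) (fun _ => Mb)
      (testDist (stdGaussian _) t (labelledTest lam V t.1)) i / lam := by
  obtain ⟨⟨ν, hν⟩, θ, hθ⟩ := i
  have hprob := isProbabilityMeasure_linModel (ν := ν) hX hθ
  set T := testErr (linMs X) (fun _ => Mb)
    (testDist (stdGaussian _) t (labelledTest lam V t.1)) (⟨ν, hν⟩, ⟨θ, hθ⟩)
  have hT : √T ^ 2 = T := Real.sq_sqrt (integral_nonneg fun _ => sq_nonneg _)
  have hint (j : Fin 3) : ∫ g, (∑ z, ((linModel X ν θ).real {z} - Mb.real {z}) *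
      labelledTest lam V t.1 j g z) ^ 2 ∂(stdGaussian _) ≤ 12 * √T ^ 2 := by
    calc _ ≤ 4 * Fintype.card (Fin 3) * T :=
          integral_sq_sum_le_integral_Dl_sq_testDist (measurable_labelledTest t.1)
            (hV.abs_labelledTest_le_one hX hlam.le t.2) t (linModel X ν θ) Mb j
      _ = 12 * √T ^ 2 := by
          rw [hT, Fintype.card_fin]
          norm_num
  have hloss := hV.sum_mul_abs_inner_sub_le hlam (Real.sqrt_nonneg T) (by simpa using hd) t.2 hθ
    (fun z => measureReal_nonneg) (sum_linModel_real_mul_label_sub_inner hX hθ) (hopt θ hθ) hint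
  rw [hT, finrank_euclideanSpace_fin] at hloss
  rwa [linLossL1_eq_sum hX hθ]

theorem exists_isTestDist_linLossL1_le (hd : 1 ≤ d) (hX : ∀ x ∈ X, ‖x‖ ≤ 1) (hlam : 0 < lam)
    (Mb : Measure ({x // x ∈ X} × Bool)) [IsProbabilityMeasure Mb] :
    ∃ (t : {θ : EuclideanSpace ℝ (Fin d) // ‖θ‖ ≤ 1}) (q : Measure _), IsTestDist q ∧
      ∀ i, linLossL1 X i t ≤ 8 * d * lam + 181 * testErr (linMs X) (fun _ => Mb) q i / lam := by
  obtain ⟨V, hV⟩ := exists_isInfoRoot hlam.ne' (ν := fun z => Mb.real {z})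
    (fun _ => measureReal_nonneg) fun z => (z.1.1 : EuclideanSpace ℝ (Fin d))
  obtain ⟨t, ht, hopt⟩ := exists_sum_mul_sub_inner_mul_inner_sub_nonpos
    (Metric.nonempty_closedBall.2 zero_le_one) (isCompact_closedBall 0 1)
    (convex_closedBall (0 : EuclideanSpace ℝ (Fin d)) 1)
    (w := fun z => Mb.real {z} / ‖V (V z.1.1)‖)
    (fun _ => div_nonneg measureReal_nonneg (norm_nonneg _)) (fun z => label z.2) fun z => z.1.1
  simp only [mem_closedBall_zero_iff] at ht hopt
  exact ⟨⟨t, ht⟩, testDist (stdGaussian _) ⟨t, ht⟩ (labelledTest lam V t),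
    isTestDist_testDist (measurable_labelledTest t) (hV.abs_labelledTest_le_one hX hlam.le ht),
    hV.linLossL1_le hd hX hlam hopt⟩

theorem pdecOffLDP_linMs_le (hd : 1 ≤ d) (hX : ∀ x ∈ X, ‖x‖ ≤ 1) {γ : ℝ} (hγ : 0 < γ)
    (Mb : Measure ({x // x ∈ X} × Bool)) [IsProbabilityMeasure Mb] :
    pdecOffLDP (linMs X) (linLossL1 X) (fun _ => Mb) γ ≤ ((1448 * d / γ : ℝ) : EReal) := by
  obtain ⟨t, q, hq, hloss⟩ := exists_isTestDist_linLossL1_le hd hX (by positivity : 0 < 181 / γ) Mb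
  refine pdecOffLDP_le_of_forall_loss_le hq (t := t) fun i => (hloss i).trans_eq ?_
  field_simp
  ring

end LinearModel

/-- **Private DEC upper bound for linear regression under `L₁` estimation error.** There
is a universal constant `C` such that for every `d ≥ 1` and every finite subset `X` of the
closed unit ball of `ℝ^d`: (i) for every `γ > 0` and every probability distribution `M̄` on
`X × {−1,1}`, `p-dec^{o,LDP}_γ(M_Lin, M̄) ≤ C d / γ`; consequently (ii) for every `ε > 0`,
`p-dec^{LDP}_ε(M_Lin) ≤ 2 √(C d) ε` (reference models ranging over `co(M_Lin)`). -/
theorem linear_regression_pdec_upper :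
    ∃ C : ℝ, 0 < C ∧ ∀ d : ℕ, 1 ≤ d → ∀ X : Finset (EuclideanSpace ℝ (Fin d)),
      (∀ x ∈ X, ‖x‖ ≤ 1) →
      (∀ γ : ℝ, 0 < γ → ∀ Mb : Measure ({x // x ∈ X} × Bool), IsProbabilityMeasure Mb →
        pdecOffLDP (linMs X) (linLossL1 X) (fun _ => Mb) γ ≤ ((C * d / γ : ℝ) : EReal)) ∧
      ∀ ε : ℝ, 0 < ε →
        (⨆ Mb : coLin X, pdecLDP (linMs X) (linLossL1 X) (fun _ => Mb.1) ε) ≤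
          ((2 * Real.sqrt (C * d) * ε : ℝ) : EReal) := by
  refine ⟨1448, by norm_num, fun d hd X hX => ⟨fun γ hγ Mb _ => pdecOffLDP_linMs_le hd hX hγ Mb,
    fun ε hε => iSup_le fun ⟨Mb, hMb⟩ => ?_⟩⟩
  have := isProbabilityMeasure_of_mem_coLin hX hMb
  have hsqrt : 0 < √(1448 * d : ℝ) := by positivity
  -- This `γ` balances the two terms `1448 * d / γ` and `γ * ε ^ 2`.
  have hγ : 0 < √(1448 * d) / ε := div_pos hsqrt hε
  refine (pdecLDP_le_pdecOffLDP_add hγ.le ε).trans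
    ((add_le_add_left (pdecOffLDP_linMs_le hd hX hγ Mb) _).trans_eq ?_)
  rw [← EReal.coe_add, EReal.coe_eq_coe_iff, div_div_eq_mul_div]
  nth_rw 1 [← Real.mul_self_sqrt (by positivity : (0 : ℝ) ≤ 1448 * d)]
  field_simp
  ring
end

section
/- Fractional covering number lower bound for interactive locally private learning: Let Z, O, Π be measurable spaces, let M be a class of models, each model M assigning to every π ∈ Π a probability measure M(π) on Z, and let L : M × Π → ℝ be a loss with each set {π : L(M,π) ≤ Δ} measurable. Let T ≥ 1, α > 0, Δ ≥ 0. Consider any T-round α-LDP algorithm: at each round t = 1,…,T it selects (possibly at random, measurably in the past transcript (π¹,o¹,…,π^{t−1},o^{t−1})) a decision π^t ∈ Π and an α-DP channel Q^t from Z to O; a latent sample z^t ∼ M(π^t) is drawn and the algorithm observes o^t ∼ Q^t(·|z^t); after round T it outputs π_{T+1} ∈ Π measurably in the transcript, and P^{M,Alg} denotes the resulting law. Suppose that for every M ∈ M: P^{M,Alg}( L(M, π_{T+1}) ≤ Δ ) ≥ 1/2. Then T ≥ ( log DC_Δ(M) − 2 ) / ( 2·(e^α − 1)² ). -/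
/-!
Averaging an `α`-DP channel over any two distributions of its input yields observation laws whose
likelihood ratio lies in `[e^{-α}, e^α]`. A ratio `g` in `[a, b]` satisfies `(g - a) (b - g) ≥ 0`,
hence `∫ g² ≤ a + b - a b`, so one round contributes at most the factor
`e^{-α} + e^α - 1 ≤ e^{α²}` to `1 + χ²`. By Cauchy–Schwarz, a bound `1 + χ²(μ ‖ ν) ≤ C` says that
`(∫ f dμ)² ≤ C ∫ f² dν` for all `f ≥ 0`, and in this form the bounds multiply along the rounds.
So under any two models `M` and `M₀` the output satisfies `P_M(A)² ≤ e^{T α²} P_{M₀}(A)`.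

Take for `p` the law of the output under one fixed model `M₀`, and for `A` the success event of
`M`: then `1 / p(A) ≤ 4 e^{T α²}`, and `p` competes in the infimum defining the
fractional covering number. It remains to use `α ≤ e^α - 1` and `log 4 ≤ 2`.
-/

/-- A `T`-round interactive `α`-LDP algorithm.  Its internal randomness is modelled by a
random seed drawn once from a probability space `(R, seed)` (any randomized algorithm is
such a mixture of deterministic ones).  At round `t`, given the seed and the past
transcript `(π¹,o¹,…,π^{t−1},o^{t−1})`, it selects (measurably) a decision `dec t` and an
`α`-DP Markov channel `chan t` from `Z` to `O`; after `T` rounds it outputs a decision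
measurably in the transcript. -/
structure LDPAlg.{u', v', w', r'} (Z : Type u') (O : Type v') (Θ : Type w')
    [MeasurableSpace Z] [MeasurableSpace O] [MeasurableSpace Θ] (T : ℕ) (α : ℝ) :
    Type (max u' v' w' (r' + 1)) where
  R : Type r'
  [mR : MeasurableSpace R]
  seed : MeasureTheory.Measure R
  seedProb : MeasureTheory.IsProbabilityMeasure seed
  dec : (t : ℕ) → R × (Fin t → Θ × O) → Θ
  chan : (t : ℕ) → R × (Fin t → Θ × O) → ProbabilityTheory.Kernel Z O
  out : R × (Fin T → Θ × O) → Θ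
  dec_meas : ∀ t, Measurable (dec t)
  out_meas : Measurable out
  chan_markov : ∀ t rh, ProbabilityTheory.IsMarkovKernel (chan t rh)
  chan_meas : ∀ t, ∀ E : Set O, MeasurableSet E →
      Measurable fun p : (R × (Fin t → Θ × O)) × Z => chan t p.1 p.2 E
  chan_dp : ∀ t rh, ∀ z z' : Z, ∀ E : Set O, MeasurableSet E →
      chan t rh z E ≤ ENNReal.ofReal (Real.exp α) * chan t rh z' E

open MeasureTheory ProbabilityTheory
open scoped ENNReal

instance {Z O Θ : Type*} [MeasurableSpace Z] [MeasurableSpace O] [MeasurableSpace Θ]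
    {T : ℕ} {α : ℝ} (alg : LDPAlg Z O Θ T α) : MeasurableSpace alg.R := alg.mR

/-- The law of the transcript after `t` rounds of interaction between the algorithm `alg`
(with seed `r`) and the (stationary) environment given by the model `M : Θ → Δ(Z)`: at
round `t`, a latent sample `z^t ∼ M(π^t)` is drawn and the algorithm observes
`o^t ∼ (chan t)(·|z^t)`. -/
noncomputable def LDPAlg.histLaw {Z O Θ : Type*} [MeasurableSpace Z] [MeasurableSpace O]
    [MeasurableSpace Θ] {T : ℕ} {α : ℝ} (alg : LDPAlg Z O Θ T α)
    (M : Θ → Measure Z) (r : alg.R) : (t : ℕ) → Measure (Fin t → Θ × O)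
  | 0 => Measure.dirac fun i => i.elim0
  | t + 1 =>
      (alg.histLaw M r t).bind fun h =>
        (((M (alg.dec t (r, h))).bind fun z => alg.chan t (r, h) z).map
          fun o => Fin.snoc h (alg.dec t (r, h), o))

/-- The law `P^{M,Alg}` of the output decision `π_{T+1}` of the algorithm `alg` under the
model `M`. -/
noncomputable def LDPAlg.outLaw {Z O Θ : Type*} [MeasurableSpace Z] [MeasurableSpace O]
    [MeasurableSpace Θ] {T : ℕ} {α : ℝ} (alg : LDPAlg Z O Θ T α)
    (M : Θ → Measure Z) : Measure Θ :=
  alg.seed.bind fun r => (alg.histLaw M r T).map fun h => alg.out (r, h)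

/-- The fractional covering number
`DC_Δ(M) := inf_{p ∈ Δ(Θ)} sup_{M ∈ M} 1 / p({π : L(M,π) ≤ Δ})` of a model class indexed
by `ι` with loss `loss`. -/
noncomputable def fracCovDC {Θ ι : Type*} [MeasurableSpace Θ]
    (loss : ι → Θ → ℝ) (Δ : ℝ) : ℝ≥0∞ :=
  ⨅ p : {p : Measure Θ // IsProbabilityMeasure p},
    ⨆ i : ι, (p.1 {π | loss i π ≤ Δ})⁻¹

section ChiSquare

variable {X Y : Type*} [MeasurableSpace X] [MeasurableSpace Y] {μ ν : Measure X} {a b C D : ℝ≥0∞}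

lemma sq_lintegral_mul_le (μ : Measure X) {f g : X → ℝ≥0∞} (hf : AEMeasurable f μ)
    (hg : AEMeasurable g μ) :
    (∫⁻ x, f x * g x ∂μ) ^ 2 ≤ (∫⁻ x, f x ^ 2 ∂μ) * ∫⁻ x, g x ^ 2 ∂μ := by
  have sq_rpow_half (u : ℝ≥0∞) : (u ^ (1 / 2 : ℝ)) ^ 2 = u := by
    rw [← ENNReal.rpow_natCast, ← ENNReal.rpow_mul]
    norm_num
  have holder := ENNReal.lintegral_mul_le_Lp_mul_Lq μ Real.HolderConjugate.two_two hf hg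
  simpa only [Pi.mul_apply, mul_pow, sq_rpow_half, ENNReal.rpow_two]
    using pow_le_pow_left' holder 2

lemma rnDeriv_ae_le_of_le_smul [SigmaFinite ν] (h : μ ≤ b • ν) :
    ∀ᵐ x ∂ν, μ.rnDeriv ν x ≤ b := by
  refine ae_le_of_forall_setLIntegral_le_of_sigmaFinite (Measure.measurable_rnDeriv μ ν)
    fun s _ _ => ?_
  calc ∫⁻ x in s, μ.rnDeriv ν x ∂ν ≤ μ s := Measure.setLIntegral_rnDeriv_le s
    _ ≤ b * ν s := h s
    _ = ∫⁻ _ in s, b ∂ν := (setLIntegral_const s b).symm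

lemma ae_le_rnDeriv_of_smul_le [SigmaFinite ν] [μ.HaveLebesgueDecomposition ν] (hμν : μ ≪ ν)
    (h : a • ν ≤ μ) : ∀ᵐ x ∂ν, a ≤ μ.rnDeriv ν x := by
  refine ae_le_of_forall_setLIntegral_le_of_sigmaFinite measurable_const fun s hs _ => ?_
  calc ∫⁻ _ in s, a ∂ν = a * ν s := setLIntegral_const s a
    _ ≤ μ s := h s
    _ = ∫⁻ x in s, μ.rnDeriv ν x ∂ν := (Measure.setLIntegral_rnDeriv' hμν hs).symm

-- `(g - a) * (b - g) ≥ 0`, rearranged to avoid truncated subtraction.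
lemma sq_add_mul_le_add_mul_of_le {g : ℝ≥0∞} (hag : a ≤ g) (hgb : g ≤ b) :
    g ^ 2 + a * b ≤ (a + b) * g := by
  obtain ⟨d, rfl⟩ := exists_add_of_le hag
  obtain ⟨e, rfl⟩ := exists_add_of_le hgb
  calc (a + d) ^ 2 + a * (a + d + e) ≤ (a + d) ^ 2 + a * (a + d + e) + d * e := le_self_add
    _ = (a + (a + d + e)) * (a + d) := by ring

lemma lintegral_sq_rnDeriv_le [IsProbabilityMeasure μ] [IsProbabilityMeasure ν] (hb : b ≠ ∞)
    (hlower : a • ν ≤ μ) (hupper : μ ≤ b • ν) :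
    ∫⁻ x, μ.rnDeriv ν x ^ 2 ∂ν ≤ a + b - a * b := by
  have hμν : μ ≪ ν := Measure.absolutelyContinuous_of_le_smul hupper
  have ha : a ≠ ∞ := by
    have hle_one : a ≤ 1 := by simpa using hlower Set.univ
    exact ne_top_of_le_ne_top ENNReal.one_ne_top hle_one
  refine ENNReal.le_sub_of_add_le_right (ENNReal.mul_ne_top ha hb) ?_
  calc ∫⁻ x, μ.rnDeriv ν x ^ 2 ∂ν + a * b = ∫⁻ x, (μ.rnDeriv ν x ^ 2 + a * b) ∂ν := by
        rw [lintegral_add_right _ measurable_const, lintegral_const, measure_univ, mul_one]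
    _ ≤ ∫⁻ x, (a + b) * μ.rnDeriv ν x ∂ν := by
        apply lintegral_mono_ae
        filter_upwards [ae_le_rnDeriv_of_smul_le hμν hlower, rnDeriv_ae_le_of_le_smul hupper]
          with x using sq_add_mul_le_add_mul_of_le
    _ = a + b := by
        rw [lintegral_const_mul _ (Measure.measurable_rnDeriv μ ν), Measure.lintegral_rnDeriv hμν,
          measure_univ, mul_one]

lemma exp_neg_add_exp_sub_one_le_exp_sq (α : ℝ) :
    Real.exp (-α) + Real.exp α - 1 ≤ Real.exp (α ^ 2) := by
  have hcosh : Real.exp (-α) + Real.exp α ≤ 2 * Real.exp (α ^ 2 / 2) := by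
    linarith [Real.cosh_le_exp_half_sq α, Real.cosh_eq α]
  have hsquare : Real.exp (α ^ 2) = Real.exp (α ^ 2 / 2) ^ 2 := by
    rw [← Real.exp_nat_mul]
    ring_nf
  linarith [sq_nonneg (Real.exp (α ^ 2 / 2) - 1)]

/-- The bound `1 + χ²(μ ‖ ν) ≤ C` on the `χ²`-divergence, in its dual form: the density
`dμ/dν`, whose `L²(ν)`-norm squared is `1 + χ²(μ ‖ ν)`, is replaced by the functional
`f ↦ ∫ f dμ` it represents. In this form the bound passes to mixtures without producing a density
of the mixed laws. -/
def ChiSqLE (μ ν : Measure X) (C : ℝ≥0∞) : Prop :=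
  ∀ f : X → ℝ≥0∞, Measurable f → (∫⁻ x, f x ∂μ) ^ 2 ≤ C * ∫⁻ x, f x ^ 2 ∂ν

namespace ChiSqLE

lemma of_smul_le_of_le_smul [IsProbabilityMeasure μ] [IsProbabilityMeasure ν] (hb : b ≠ ∞)
    (hlower : a • ν ≤ μ) (hupper : μ ≤ b • ν) : ChiSqLE μ ν (a + b - a * b) := by
  intro f hf
  have hdensity : Measurable (μ.rnDeriv ν) := Measure.measurable_rnDeriv μ ν
  calc (∫⁻ x, f x ∂μ) ^ 2 = (∫⁻ x, μ.rnDeriv ν x * f x ∂ν) ^ 2 := by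
        rw [lintegral_rnDeriv_mul (Measure.absolutelyContinuous_of_le_smul hupper)
          hf.aemeasurable]
    _ ≤ (∫⁻ x, μ.rnDeriv ν x ^ 2 ∂ν) * ∫⁻ x, f x ^ 2 ∂ν :=
        sq_lintegral_mul_le ν hdensity.aemeasurable hf.aemeasurable
    _ ≤ (a + b - a * b) * ∫⁻ x, f x ^ 2 ∂ν := by
        gcongr
        exact lintegral_sq_rnDeriv_le hb hlower hupper

protected lemma refl (μ : Measure X) [IsProbabilityMeasure μ] : ChiSqLE μ μ 1 := by
  have h : ChiSqLE μ μ (1 + 1 - 1 * 1) :=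
    of_smul_le_of_le_smul ENNReal.one_ne_top (one_smul _ μ).le (one_smul _ μ).ge
  simpa using h

lemma mono (h : ChiSqLE μ ν C) (hCD : C ≤ D) : ChiSqLE μ ν D := fun f hf =>
  (h f hf).trans (by gcongr)

lemma map (h : ChiSqLE μ ν C) {φ : X → Y} (hφ : Measurable φ) :
    ChiSqLE (μ.map φ) (ν.map φ) C := by
  intro f hf
  rw [lintegral_map hf hφ, lintegral_map (hf.pow_const 2) hφ]
  exact h _ (hf.comp hφ)

lemma comp {κ η : Kernel X Y} (hμν : ChiSqLE μ ν C) (hκη : ∀ x, ChiSqLE (κ x) (η x) D) :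
    ChiSqLE (κ ∘ₘ μ) (η ∘ₘ ν) (C * D) := by
  intro f hf
  have hf2 : Measurable fun y => f y ^ 2 := hf.pow_const 2
  calc (∫⁻ y, f y ∂(κ ∘ₘ μ)) ^ 2 = (∫⁻ x, ∫⁻ y, f y ∂κ x ∂μ) ^ 2 := by
        rw [Measure.lintegral_bind κ.aemeasurable hf.aemeasurable]
    _ ≤ C * ∫⁻ x, (∫⁻ y, f y ∂κ x) ^ 2 ∂ν := hμν _ hf.lintegral_kernel
    _ ≤ C * ∫⁻ x, D * ∫⁻ y, f y ^ 2 ∂η x ∂ν := by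
        gcongr with x
        exact hκη x f hf
    _ = C * D * ∫⁻ y, f y ^ 2 ∂(η ∘ₘ ν) := by
        rw [lintegral_const_mul _ hf2.lintegral_kernel,
          Measure.lintegral_bind η.aemeasurable hf2.aemeasurable, mul_assoc]

lemma sq_measure_le (h : ChiSqLE μ ν C) {A : Set X} (hA : MeasurableSet A) :
    μ A ^ 2 ≤ C * ν A := by
  have sq_indicator : (fun x => A.indicator (1 : X → ℝ≥0∞) x ^ 2) = A.indicator 1 := by
    ext x
    by_cases hx : x ∈ A <;> simp [hx]
  have hindicator := h (A.indicator 1) (measurable_one.indicator hA)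
  rwa [sq_indicator, lintegral_indicator_one hA, lintegral_indicator_one hA] at hindicator

lemma of_le_exp_smul [IsProbabilityMeasure μ] [IsProbabilityMeasure ν] {α : ℝ}
    (hμν : μ ≤ ENNReal.ofReal (Real.exp α) • ν) (hνμ : ν ≤ ENNReal.ofReal (Real.exp α) • μ) :
    ChiSqLE μ ν (ENNReal.ofReal (Real.exp (α ^ 2))) := by
  have exp_neg_mul_exp :
      ENNReal.ofReal (Real.exp (-α)) * ENNReal.ofReal (Real.exp α) = 1 := by
    rw [← ENNReal.ofReal_mul (Real.exp_nonneg _), ← Real.exp_add, neg_add_cancel, Real.exp_zero,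
      ENNReal.ofReal_one]
  have hlower : ENNReal.ofReal (Real.exp (-α)) • ν ≤ μ :=
    calc ENNReal.ofReal (Real.exp (-α)) • ν
        ≤ ENNReal.ofReal (Real.exp (-α)) • ENNReal.ofReal (Real.exp α) • μ := by gcongr
      _ = μ := by rw [smul_smul, exp_neg_mul_exp, one_smul]
  refine (of_smul_le_of_le_smul ENNReal.ofReal_ne_top hlower hμν).mono ?_
  rw [exp_neg_mul_exp, ← ENNReal.ofReal_add (Real.exp_nonneg _) (Real.exp_nonneg _),
    ← ENNReal.ofReal_one, ← ENNReal.ofReal_sub _ zero_le_one]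
  exact ENNReal.ofReal_le_ofReal (exp_neg_add_exp_sub_one_le_exp_sq α)

end ChiSqLE

end ChiSquare

section Kernels

variable {X Y W : Type*} [MeasurableSpace X] [MeasurableSpace Y] [MeasurableSpace W]

lemma snd_compProd_apply_eq_comp_sectR (κ : Kernel X Y) [IsSFiniteKernel κ]
    (η : Kernel (X × Y) W) [IsSFiniteKernel η] (x : X) :
    Kernel.snd (κ ⊗ₖ η) x = η.sectR x ∘ₘ κ x := by
  rw [Kernel.snd_apply, Kernel.compProd_apply_eq_compProd_sectR, ← Measure.snd_compProd,
    Measure.snd]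

lemma map_id_prod_apply (κ : Kernel X Y) [IsSFiniteKernel κ] {f : X × Y → W} (hf : Measurable f)
    (x : X) : (Kernel.id ×ₖ κ).map f x = (κ x).map fun y => f (x, y) := by
  rw [Kernel.map_apply _ hf, Kernel.prod_apply, Kernel.id_apply, Measure.dirac_prod,
    Measure.map_map hf measurable_prodMk_left]
  rfl

lemma comp_le_smul_comp_of_le_smul {κ : Kernel X Y} {c : ℝ≥0∞} (hκ : ∀ x x', κ x ≤ c • κ x')
    (μ ν : Measure X) [IsProbabilityMeasure μ] [IsProbabilityMeasure ν] :
    κ ∘ₘ μ ≤ c • (κ ∘ₘ ν) := by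
  refine Measure.le_iff.2 fun E hE => ?_
  simp only [Measure.smul_apply, smul_eq_mul, Measure.bind_apply hE κ.aemeasurable]
  have le_average (x : X) : κ x E ≤ c * ∫⁻ x', κ x' E ∂ν :=
    calc κ x E = ∫⁻ _, κ x E ∂ν := by simp
      _ ≤ ∫⁻ x', c * κ x' E ∂ν := lintegral_mono fun x' => hκ x x' E
      _ = c * ∫⁻ x', κ x' E ∂ν := lintegral_const_mul _ (κ.measurable_coe hE)
  calc ∫⁻ x, κ x E ∂μ ≤ ∫⁻ _, c * ∫⁻ x', κ x' E ∂ν ∂μ := lintegral_mono le_average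
    _ = c * ∫⁻ x', κ x' E ∂ν := by simp

end Kernels

namespace LDPAlg

variable {Z O Θ : Type*} [MeasurableSpace Z] [MeasurableSpace O] [MeasurableSpace Θ]
  {T : ℕ} {α : ℝ} (alg : LDPAlg Z O Θ T α)

instance : IsProbabilityMeasure alg.seed := alg.seedProb

lemma nonempty_decision (alg : LDPAlg Z O Θ T α) : Nonempty Θ :=
  (nonempty_of_isProbabilityMeasure alg.seed).map fun r => alg.dec 0 (r, fun i => i.elim0)

instance (t : ℕ) (p : alg.R × (Fin t → Θ × O)) : IsMarkovKernel (alg.chan t p) :=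
  alg.chan_markov t p

/-- The channel of round `t` as a kernel in the seed, the past transcript and the latent sample. -/
noncomputable def chanKernel (t : ℕ) : Kernel ((alg.R × (Fin t → Θ × O)) × Z) O where
  toFun q := alg.chan t q.1 q.2
  measurable' := Measure.measurable_of_measurable_coe _ (alg.chan_meas t)

instance (t : ℕ) : IsMarkovKernel (alg.chanKernel t) :=
  ⟨fun q => inferInstanceAs (IsProbabilityMeasure (alg.chan t q.1 q.2))⟩

lemma chan_le_smul (t : ℕ) (p : alg.R × (Fin t → Θ × O)) (z z' : Z) :
    alg.chan t p z ≤ ENNReal.ofReal (Real.exp α) • alg.chan t p z' :=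
  Measure.le_iff.2 (alg.chan_dp t p z z')

/-- The transcript after round `t`, from the seed, the past transcript and the observation. -/
def extend (t : ℕ) (q : (alg.R × (Fin t → Θ × O)) × O) : Fin (t + 1) → Θ × O :=
  Fin.snoc q.1.2 (alg.dec t q.1, q.2)

lemma measurable_extend (t : ℕ) : Measurable (alg.extend t) := by
  refine measurable_pi_lambda _ fun i => ?_
  induction i using Fin.lastCases with
  | last =>
    simp only [extend, Fin.snoc_last]
    exact ((alg.dec_meas t).comp measurable_fst).prodMk measurable_snd
  | cast j =>
    simp only [extend, Fin.snoc_castSucc]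
    fun_prop

variable (M N : Kernel Θ Z)

/-- The law of the observation of round `t` under the model `M`, as a kernel in the seed and the
past transcript. -/
noncomputable def obsKernel (t : ℕ) : Kernel (alg.R × (Fin t → Θ × O)) O :=
  Kernel.snd (M.comap (alg.dec t) (alg.dec_meas t) ⊗ₖ alg.chanKernel t)

instance [IsMarkovKernel M] (t : ℕ) : IsMarkovKernel (alg.obsKernel M t) := by
  unfold obsKernel; infer_instance

lemma obsKernel_apply [IsMarkovKernel M] (t : ℕ) (p : alg.R × (Fin t → Θ × O)) :
    alg.obsKernel M t p = alg.chan t p ∘ₘ M (alg.dec t p) :=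
  snd_compProd_apply_eq_comp_sectR _ _ p

lemma obsKernel_le_smul [IsMarkovKernel M] [IsMarkovKernel N] (t : ℕ)
    (p : alg.R × (Fin t → Θ × O)) :
    alg.obsKernel M t p ≤ ENNReal.ofReal (Real.exp α) • alg.obsKernel N t p := by
  rw [obsKernel_apply, obsKernel_apply]
  exact comp_le_smul_comp_of_le_smul (alg.chan_le_smul t p) _ _

/-- One round of interaction with the model `M`: the law of the transcript after round `t`, as a
kernel in the seed and the past transcript. -/
noncomputable def stepKernel (t : ℕ) : Kernel (alg.R × (Fin t → Θ × O)) (Fin (t + 1) → Θ × O) :=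
  (Kernel.id ×ₖ alg.obsKernel M t).map (alg.extend t)

instance [IsMarkovKernel M] (t : ℕ) : IsMarkovKernel (alg.stepKernel M t) :=
  Kernel.IsMarkovKernel.map _ (alg.measurable_extend t)

lemma stepKernel_apply [IsMarkovKernel M] (t : ℕ) (p : alg.R × (Fin t → Θ × O)) :
    alg.stepKernel M t p = (alg.obsKernel M t p).map fun o => alg.extend t (p, o) :=
  map_id_prod_apply _ (alg.measurable_extend t) p

lemma histLaw_succ [IsMarkovKernel M] (r : alg.R) (t : ℕ) :
    alg.histLaw M r (t + 1) = (alg.stepKernel M t).sectR r ∘ₘ alg.histLaw M r t := by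
  have sectR_stepKernel (h : Fin t → Θ × O) : (alg.stepKernel M t).sectR r h =
      (alg.chan t (r, h) ∘ₘ M (alg.dec t (r, h))).map fun o => alg.extend t ((r, h), o) := by
    rw [Kernel.sectR_apply, stepKernel_apply, obsKernel_apply]
  exact congrArg (alg.histLaw M r t).bind (funext fun h => (sectR_stepKernel h).symm)

/-- The transcript law `histLaw`, as a kernel in the seed. Building it from kernel operations
provides the measurability in the seed that the mixture `outLaw` over seeds relies on. -/
noncomputable def histKernel : (t : ℕ) → Kernel alg.R (Fin t → Θ × O)
  | 0 => Kernel.const _ (Measure.dirac fun i => i.elim0)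
  | t + 1 => Kernel.snd (histKernel t ⊗ₖ alg.stepKernel M t)

instance [IsMarkovKernel M] (t : ℕ) : IsMarkovKernel (alg.histKernel M t) := by
  induction t <;> unfold histKernel <;> infer_instance

lemma histKernel_apply [IsMarkovKernel M] (r : alg.R) (t : ℕ) :
    alg.histKernel M t r = alg.histLaw M r t := by
  induction t with
  | zero => rfl
  | succ t ih => rw [histKernel, snd_compProd_apply_eq_comp_sectR, ih, histLaw_succ]

/-- The law of the output decision under the model `M`, as a kernel in the seed. -/
noncomputable def outKernel : Kernel alg.R Θ :=
  (Kernel.id ×ₖ alg.histKernel M T).map alg.out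

instance [IsMarkovKernel M] : IsMarkovKernel (alg.outKernel M) :=
  Kernel.IsMarkovKernel.map _ alg.out_meas

lemma outKernel_apply [IsMarkovKernel M] (r : alg.R) :
    alg.outKernel M r = (alg.histLaw M r T).map fun h => alg.out (r, h) := by
  rw [outKernel, map_id_prod_apply _ alg.out_meas, histKernel_apply]

lemma outLaw_eq_comp [IsMarkovKernel M] : alg.outLaw M = alg.outKernel M ∘ₘ alg.seed :=
  congrArg alg.seed.bind (funext fun r => (alg.outKernel_apply M r).symm)

instance [IsMarkovKernel M] : IsProbabilityMeasure (alg.outLaw M) := by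
  rw [outLaw_eq_comp]
  infer_instance

lemma chiSqLE_stepKernel [IsMarkovKernel M] [IsMarkovKernel N] (t : ℕ)
    (p : alg.R × (Fin t → Θ × O)) :
    ChiSqLE (alg.stepKernel M t p) (alg.stepKernel N t p)
      (ENNReal.ofReal (Real.exp (α ^ 2))) := by
  rw [stepKernel_apply, stepKernel_apply]
  exact (ChiSqLE.of_le_exp_smul (alg.obsKernel_le_smul M N t p)
    (alg.obsKernel_le_smul N M t p)).map ((alg.measurable_extend t).comp measurable_prodMk_left)

lemma chiSqLE_histLaw [IsMarkovKernel M] [IsMarkovKernel N] (r : alg.R) (t : ℕ) :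
    ChiSqLE (alg.histLaw M r t) (alg.histLaw N r t) (ENNReal.ofReal (Real.exp (α ^ 2)) ^ t) := by
  induction t with
  | zero =>
    rw [pow_zero]
    exact ChiSqLE.refl (Measure.dirac _)
  | succ t ih =>
    rw [histLaw_succ, histLaw_succ, pow_succ]
    exact ih.comp fun h => alg.chiSqLE_stepKernel M N t (r, h)

lemma chiSqLE_outLaw [IsMarkovKernel M] [IsMarkovKernel N] :
    ChiSqLE (alg.outLaw M) (alg.outLaw N) (ENNReal.ofReal (Real.exp (T * α ^ 2))) := by
  have hout (r : alg.R) : ChiSqLE (alg.outKernel M r) (alg.outKernel N r)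
      (ENNReal.ofReal (Real.exp (α ^ 2)) ^ T) := by
    rw [outKernel_apply, outKernel_apply]
    exact (alg.chiSqLE_histLaw M N r T).map (alg.out_meas.comp measurable_prodMk_left)
  rw [outLaw_eq_comp, outLaw_eq_comp, Real.exp_nat_mul, ENNReal.ofReal_pow (Real.exp_nonneg _),
    ← one_mul (ENNReal.ofReal _ ^ T)]
  exact (ChiSqLE.refl alg.seed).comp hout

lemma inv_outLaw_le [IsMarkovKernel M] [IsMarkovKernel N] {A : Set Θ} (hA : MeasurableSet A)
    {δ : ℝ} (hδ : 0 < δ) (hMA : ENNReal.ofReal δ ≤ alg.outLaw M A) :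
    (alg.outLaw N A)⁻¹ ≤ ENNReal.ofReal (Real.exp (T * α ^ 2 - 2 * Real.log δ)) := by
  have hsq : ENNReal.ofReal (δ ^ 2) ≤
      ENNReal.ofReal (Real.exp (T * α ^ 2)) * alg.outLaw N A := by
    rw [ENNReal.ofReal_pow hδ.le]
    exact (pow_le_pow_left' hMA 2).trans ((alg.chiSqLE_outLaw M N).sq_measure_le hA)
  have hexp : Real.exp (T * α ^ 2 - 2 * Real.log δ) = Real.exp (T * α ^ 2) / δ ^ 2 := by
    rw [Real.exp_sub, ← Real.exp_log (pow_pos hδ 2), Real.log_pow]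
    norm_num
  rw [hexp, ENNReal.inv_le_iff_inv_le, ← ENNReal.ofReal_inv_of_pos (by positivity), inv_div,
    ENNReal.ofReal_div_of_pos (Real.exp_pos _)]
  exact ENNReal.div_le_of_le_mul' hsq

end LDPAlg

lemma fracCovDC_le {Θ ι : Type*} [MeasurableSpace Θ] {loss : ι → Θ → ℝ} {Δ : ℝ} {C : ℝ≥0∞}
    (p : Measure Θ) [hp : IsProbabilityMeasure p] (hC : ∀ i, (p {π | loss i π ≤ Δ})⁻¹ ≤ C) :
    fracCovDC loss Δ ≤ C :=
  iInf_le_of_le ⟨p, hp⟩ (iSup_le hC)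

lemma mul_sq_sub_two_mul_log_half_le (T : ℕ) {α : ℝ} (hα : 0 ≤ α) :
    T * α ^ 2 - 2 * Real.log 2⁻¹ ≤ 2 * T * (Real.exp α - 1) ^ 2 + 2 := by
  have hlog : -Real.log 2⁻¹ ≤ 1 := by
    rw [Real.log_inv, neg_neg]
    linarith [Real.log_le_sub_one_of_pos two_pos]
  have hsq : α ^ 2 ≤ (Real.exp α - 1) ^ 2 :=
    pow_le_pow_left₀ hα (by linarith [Real.add_one_le_exp α]) 2
  have hrounds : T * α ^ 2 ≤ 2 * T * (Real.exp α - 1) ^ 2 :=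
    calc T * α ^ 2 ≤ T * (Real.exp α - 1) ^ 2 := by gcongr
      _ ≤ 2 * (T * (Real.exp α - 1) ^ 2) := le_mul_of_one_le_left (by positivity) one_le_two
      _ = 2 * T * (Real.exp α - 1) ^ 2 := by ring
  linarith

theorem ldp_fracCov_lower_general
    {Z O Θ ι : Type*} [MeasurableSpace Z] [MeasurableSpace O] [MeasurableSpace Θ]
    (Ms : ι → Kernel Θ Z) [∀ i, IsMarkovKernel (Ms i)] (loss : ι → Θ → ℝ) {T : ℕ} {α Δ : ℝ}
    (hmeasL : ∀ i, MeasurableSet {π | loss i π ≤ Δ}) (alg : LDPAlg Z O Θ T α)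
    {δ : ℝ} (hδ : 0 < δ)
    (hsucc : ∀ i, ENNReal.ofReal δ ≤ alg.outLaw (Ms i) {π | loss i π ≤ Δ}) :
    ENNReal.log (fracCovDC loss Δ) ≤ ((T * α ^ 2 - 2 * Real.log δ : ℝ) : EReal) := by
  have hcov : fracCovDC loss Δ ≤ ENNReal.ofReal (Real.exp (T * α ^ 2 - 2 * Real.log δ)) := by
    rcases isEmpty_or_nonempty ι with hι | ⟨⟨i₀⟩⟩
    · obtain ⟨π⟩ := alg.nonempty_decision
      exact fracCovDC_le (Measure.dirac π) isEmptyElim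
    · exact fracCovDC_le (alg.outLaw (Ms i₀)) fun i =>
        alg.inv_outLaw_le (Ms i) (Ms i₀) (hmeasL i) hδ (hsucc i)
  simpa only [ENNReal.log_ofReal_of_pos (Real.exp_pos _), Real.log_exp]
    using ENNReal.log_monotone hcov

/-- **Fractional covering number lower bound for interactive locally private learning.**
If a `T`-round `α`-LDP algorithm outputs, for every model `M = Ms i` of the class, a
decision satisfying `P^{M,Alg}(L(M, π_{T+1}) ≤ Δ) ≥ 1/2`, then
`T ≥ (log DC_Δ(M) − 2)/(2 (e^α − 1)²)`, i.e. `log DC_Δ(M) ≤ 2 T (e^α − 1)² + 2`. -/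
theorem ldp_fracCov_lower
    {Z O Θ ι : Type*} [MeasurableSpace Z] [MeasurableSpace O] [MeasurableSpace Θ]
    (Ms : ι → Θ → Measure Z) (hMs : ∀ i π, IsProbabilityMeasure (Ms i π))
    (hMsKer : ∀ i, Measurable (Ms i))
    (loss : ι → Θ → ℝ) (T : ℕ) (hT : 1 ≤ T) (α : ℝ) (hα : 0 < α) (Δ : ℝ) (hΔ : 0 ≤ Δ)
    (hmeasL : ∀ i, MeasurableSet {π | loss i π ≤ Δ})
    (alg : LDPAlg Z O Θ T α)
    (hsucc : ∀ i : ι, 2⁻¹ ≤ alg.outLaw (Ms i) {π | loss i π ≤ Δ}) :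
    ENNReal.log (fracCovDC loss Δ) ≤
      ((2 * T * (Real.exp α - 1) ^ 2 + 2 : ℝ) : EReal) := by
  let models (i : ι) : Kernel Θ Z := ⟨Ms i, hMsKer i⟩
  have (i : ι) : IsMarkovKernel (models i) := ⟨hMs i⟩
  have hsuccess (i : ι) : ENNReal.ofReal 2⁻¹ ≤ alg.outLaw (models i) {π | loss i π ≤ Δ} := by
    rw [ENNReal.ofReal_inv_of_pos two_pos, ENNReal.ofReal_ofNat]
    exact hsucc i
  exact (ldp_fracCov_lower_general models loss hmeasL alg (by norm_num) hsuccess).trans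
    (EReal.coe_le_coe (mul_sq_sub_two_mul_log_half_le T hα.le))
end

section
/- Fractional covering numbers for agnostic and realizable regression: Let X be a finite set, let F and F⁺ be countable classes of functions X → [−1,1] with F finite, let Z := X × [−1,1], and fix Δ > 0. For a measurable loss 𝓛 : [−1,1]² → [0,1], the regression loss of a decision f ∈ F⁺ under a probability measure M on Z is L(M, f) := E_{(x,y)∼M} 𝓛(y, f(x)) − min_{f*∈F} E_{(x,y)∼M} 𝓛(y, f*(x)). Let M_agnostic be the class of all probability measures on Z, and let M_realizable be the class of all probability measures M on Z such that y = f_M(x) M-almost surely for some f_M ∈ F. Then: (i) if 𝓛(y, ·) is 1-Lipschitz in its second argument for every y, then DC_Δ(M_agnostic) ≤ DC_Δ(F, F⁺); (ii) for the absolute loss 𝓛(y, y′) = |y − y′|, one has DC_Δ(M_agnostic) = DC_Δ(F, F⁺) = DC_Δ(M_realizable). -/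
open MeasureTheory
open scoped ENNReal

/-- The regression loss of a decision `f ∈ F⁺` under a model `M ∈ Δ(X × [−1,1])`:
`L(M, f) := E_{(x,y)∼M} 𝓛(y, f(x)) − min_{f* ∈ F} E_{(x,y)∼M} 𝓛(y, f*(x))`. -/
noncomputable def regLoss {X F F' : Type*} [Fintype F] [MeasurableSpace X]
    (lossFn : ℝ → ℝ → ℝ) (evF : F → X → ℝ) (evF' : F' → X → ℝ)
    (M : Measure (X × ℝ)) (f : F') : ℝ :=
  (∫ z, lossFn z.2 (evF' f z.1) ∂M) - ⨅ g : F, ∫ z, lossFn z.2 (evF g z.1) ∂M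

/-- The fractional covering number of a class `cls` of models on `Z = X × ℝ`, with decision
space `F⁺` and regression loss built from `𝓛`:
`DC_Δ(cls) := inf_{p ∈ Δ(F⁺)} sup_{M ∈ cls} 1 / p({f : L(M,f) ≤ Δ})`. -/
noncomputable def modelDC {X F F' : Type*} [Fintype F] [MeasurableSpace X]
    (lossFn : ℝ → ℝ → ℝ) (evF : F → X → ℝ) (evF' : F' → X → ℝ)
    (cls : Set (Measure (X × ℝ))) (Δ : ℝ) : ℝ≥0∞ :=
  ⨅ p : PMF F', ⨆ M : cls,
    (p.toOuterMeasure {f | regLoss lossFn evF evF' M.1 f ≤ Δ})⁻¹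

/-- The fractional covering number of the pair `(F, F⁺)`:
`DC_Δ(F, F⁺) := inf_{p ∈ Δ(F⁺)} sup_{μ ∈ Δ(X), f* ∈ F}
  1 / p({f ∈ F⁺ : E_{x∼μ} |f(x) − f*(x)| ≤ Δ})`. -/
noncomputable def pairDC {X F F' : Type*} [Fintype X]
    (evF : F → X → ℝ) (evF' : F' → X → ℝ) (Δ : ℝ) : ℝ≥0∞ :=
  ⨅ p : PMF F', ⨆ (μ : PMF X) (g : F),
    (p.toOuterMeasure {f | (∑ x, (μ x).toReal * |evF' f x - evF g x|) ≤ Δ})⁻¹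

/-- The class of all probability measures on `X × [−1,1]` (agnostic regression). -/
def Magnostic (X : Type*) [MeasurableSpace X] : Set (Measure (X × ℝ)) :=
  {M | IsProbabilityMeasure M ∧ M {z | z.2 ∈ Set.Icc (-1 : ℝ) 1} = 1}

/-- The class of models realizable by `F`: probability measures `M` on `X × ℝ` with
`y = f_M(x)` `M`-a.s. for some `f_M ∈ F`. -/
def Mrealizable {X F : Type*} [MeasurableSpace X] (evF : F → X → ℝ) :
    Set (Measure (X × ℝ)) :=
  {M | IsProbabilityMeasure M ∧ ∃ g : F, M {z | z.2 = evF g z.1} = 1}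

/-!
A pointwise comparison of the regression loss `L(M, f)` with the distance `E_{x∼μ} |f(x) - g(x)|`,
uniformly in `f`, compares the sets of good decisions, and therefore the covering numbers, one
distribution `p` on `F⁺` at a time.

For an agnostic model `M`, take for `μ` its marginal on `X` and for `g` a minimiser of the expected
loss over `F`: integrating the Lipschitz bound gives `L(M, f) ≤ E_{x∼μ} |f(x) - g(x)|`.

For the absolute loss and a model `M` realized by `g`, the minimum over `F` of the expected loss is
`0`, attained at `g`, so `L(M, f) = E_{x∼μ} |f(x) - g(x)|`. Every pair `(μ, g)` arises in this way,
from the law of `(x, g(x))` with `x ∼ μ`. Since realizable models are agnostic, the agnostic number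
for the absolute loss is squeezed between two copies of `DC_Δ(F, F⁺)`.
-/

section ModelClasses

variable {X F : Type*} [MeasurableSpace X] {evF : F → X → ℝ} {M : Measure (X × ℝ)}

lemma mem_Magnostic_iff :
    M ∈ Magnostic X ↔ IsProbabilityMeasure M ∧ ∀ᵐ z ∂M, z.2 ∈ Set.Icc (-1 : ℝ) 1 :=
  and_congr_right fun _ =>
    (mem_ae_iff_prob_eq_one (measurable_snd measurableSet_Icc)).symm

lemma mem_Mrealizable_iff (hevF : ∀ g, Measurable (evF g)) :
    M ∈ Mrealizable evF ↔ IsProbabilityMeasure M ∧ ∃ g, ∀ᵐ z ∂M, z.2 = evF g z.1 :=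
  and_congr_right fun _ => exists_congr fun g =>
    (mem_ae_iff_prob_eq_one
      (measurableSet_eq_fun measurable_snd ((hevF g).comp measurable_fst))).symm

lemma Mrealizable_subset_Magnostic (hevF : ∀ g x, evF g x ∈ Set.Icc (-1 : ℝ) 1) :
    Mrealizable evF ⊆ Magnostic X := by
  rintro M ⟨hprob, g, hg⟩
  refine ⟨hprob, le_antisymm prob_le_one (hg.symm.le.trans (measure_mono fun z hz => ?_))⟩
  have hlabel : z.2 = evF g z.1 := hz
  simpa only [Set.mem_ofPred_eq, hlabel] using hevF g z.1

end ModelClasses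

section Integrals

variable {X : Type*} [MeasurableSpace X] [MeasurableSingletonClass X]

lemma sum_toPMF_map_mul [Fintype X] {Z : Type*} [MeasurableSpace Z] {M : Measure Z} {φ : Z → X}
    (hφ : AEMeasurable φ M) [IsProbabilityMeasure (M.map φ)] (u : X → ℝ) :
    ∑ x, ((M.map φ).toPMF x).toReal * u x = ∫ z, u (φ z) ∂M := by
  calc ∑ x, ((M.map φ).toPMF x).toReal * u x
      = ∫ x, u x ∂(M.map φ).toPMF.toMeasure := (PMF.integral_eq_sum _ u).symm
    _ = ∫ x, u x ∂M.map φ := by rw [Measure.toPMF_toMeasure]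
    _ = ∫ z, u (φ z) ∂M := integral_map hφ (measurable_of_finite u).aestronglyMeasurable

lemma integrable_lossFn [Finite X] {lossFn : ℝ → ℝ → ℝ}
    (hmeas : Measurable (Function.uncurry lossFn)) {T : Set ℝ} {h : X → ℝ}
    (hbound : ∀ x, ∃ C, ∀ y ∈ T, |lossFn y (h x)| ≤ C)
    {M : Measure (X × ℝ)} [IsFiniteMeasure M] (hM : ∀ᵐ z ∂M, z.2 ∈ T) :
    Integrable (fun z => lossFn z.2 (h z.1)) M := by
  choose C hC using hbound
  obtain ⟨B, hB⟩ := (Set.finite_range C).bddAbove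
  have hmeas_comp : Measurable fun z : X × ℝ => lossFn z.2 (h z.1) :=
    hmeas.comp (measurable_snd.prodMk ((measurable_of_finite h).comp measurable_fst))
  refine Integrable.of_bound hmeas_comp.aestronglyMeasurable B ?_
  filter_upwards [hM] with z hz
  exact (hC z.1 z.2 hz).trans (hB ⟨z.1, rfl⟩)

end Integrals

section RegLoss

variable {X F F' : Type*} [MeasurableSpace X] [Fintype F] {evF : F → X → ℝ} {evF' : F' → X → ℝ}
  {M : Measure (X × ℝ)}

lemma exists_forall_regLoss_le_integral_abs_sub [Nonempty F] {lossFn : ℝ → ℝ → ℝ}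
    (hF : ∀ g, Integrable (fun z => lossFn z.2 (evF g z.1)) M)
    (hF' : ∀ f, Integrable (fun z => lossFn z.2 (evF' f z.1)) M)
    (hsub : ∀ f g, Integrable (fun z => evF' f z.1 - evF g z.1) M)
    (hlip : ∀ f g, ∀ᵐ z ∂M,
      |lossFn z.2 (evF' f z.1) - lossFn z.2 (evF g z.1)| ≤ |evF' f z.1 - evF g z.1|) :
    ∃ g, ∀ f, regLoss lossFn evF evF' M f ≤ ∫ z, |evF' f z.1 - evF g z.1| ∂M := by
  obtain ⟨g, hg⟩ := exists_eq_ciInf_of_finite (f := fun g => ∫ z, lossFn z.2 (evF g z.1) ∂M)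
  refine ⟨g, fun f => ?_⟩
  calc regLoss lossFn evF evF' M f
      = ∫ z, (lossFn z.2 (evF' f z.1) - lossFn z.2 (evF g z.1)) ∂M := by
        rw [regLoss, ← hg, integral_sub (hF' f) (hF g)]
    _ ≤ ∫ z, |evF' f z.1 - evF g z.1| ∂M :=
        integral_mono_ae ((hF' f).sub (hF g)) (hsub f g).abs
          ((hlip f g).mono fun _ hz => (le_abs_self _).trans hz)

lemma regLoss_abs_sub_eq_integral {g : F} (hg : ∀ᵐ z ∂M, z.2 = evF g z.1) (f : F') :
    regLoss (fun y y' => |y - y'|) evF evF' M f = ∫ z, |evF' f z.1 - evF g z.1| ∂M := by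
  have hnonneg (g' : F) : 0 ≤ ∫ z, |z.2 - evF g' z.1| ∂M :=
    integral_nonneg fun _ => abs_nonneg _
  have hzero : ∫ z, |z.2 - evF g z.1| ∂M = 0 :=
    integral_eq_zero_of_ae (hg.mono fun z hz => by simp [hz])
  have hiInf : ⨅ g', ∫ z, |z.2 - evF g' z.1| ∂M = 0 :=
    le_antisymm ((ciInf_le (Set.finite_range _).bddBelow g).trans_eq hzero)
      (Real.iInf_nonneg hnonneg)
  rw [regLoss, hiInf, sub_zero]
  exact integral_congr_ae (hg.mono fun z hz => by simp only [hz, abs_sub_comm])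

end RegLoss

section CoveringNumbers

variable {X F F' : Type*} [MeasurableSpace X] [Fintype F] {lossFn : ℝ → ℝ → ℝ}
  {evF : F → X → ℝ} {evF' : F' → X → ℝ} {cls : Set (Measure (X × ℝ))} {Δ : ℝ}

lemma modelDC_mono {cls' : Set (Measure (X × ℝ))} (h : cls ⊆ cls') :
    modelDC lossFn evF evF' cls Δ ≤ modelDC lossFn evF evF' cls' Δ :=
  iInf_mono fun _ => iSup_le fun M => le_iSup_of_le ⟨M.1, h M.2⟩ le_rfl

lemma modelDC_le_pairDC_of_regLoss_le [Fintype X]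
    (h : ∀ M ∈ cls, ∃ (μ : PMF X) (g : F), ∀ f,
      regLoss lossFn evF evF' M f ≤ ∑ x, (μ x).toReal * |evF' f x - evF g x|) :
    modelDC lossFn evF evF' cls Δ ≤ pairDC evF evF' Δ := by
  refine iInf_mono fun p => iSup_le fun ⟨M, hM⟩ => ?_
  obtain ⟨μ, g, hle⟩ := h M hM
  exact le_iSup₂_of_le μ g (ENNReal.inv_le_inv.2 (measure_mono fun f hf => (hle f).trans hf))

lemma pairDC_le_modelDC_of_le_regLoss [Fintype X]
    (h : ∀ (μ : PMF X) (g : F), ∃ M ∈ cls, ∀ f,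
      ∑ x, (μ x).toReal * |evF' f x - evF g x| ≤ regLoss lossFn evF evF' M f) :
    pairDC evF evF' Δ ≤ modelDC lossFn evF evF' cls Δ := by
  refine iInf_mono fun p => iSup₂_le fun μ g => ?_
  obtain ⟨M, hM, hle⟩ := h μ g
  exact le_iSup_of_le ⟨M, hM⟩
    (ENNReal.inv_le_inv.2 (measure_mono fun f hf => (hle f).trans hf))

variable [Fintype X] [MeasurableSingletonClass X]

theorem modelDC_Magnostic_le_pairDC [Nonempty F] {S : Set ℝ}
    (hevF : ∀ g x, evF g x ∈ S) (hevF' : ∀ f x, evF' f x ∈ S)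
    (hmeas : Measurable (Function.uncurry lossFn))
    (hbound : ∀ a ∈ S, ∃ C, ∀ y ∈ Set.Icc (-1 : ℝ) 1, |lossFn y a| ≤ C)
    (hlip : ∀ y ∈ Set.Icc (-1 : ℝ) 1, ∀ a ∈ S, ∀ b ∈ S, |lossFn y a - lossFn y b| ≤ |a - b|) :
    modelDC lossFn evF evF' (Magnostic X) Δ ≤ pairDC evF evF' Δ := by
  refine modelDC_le_pairDC_of_regLoss_le fun M hM => ?_
  obtain ⟨_, hlabel⟩ := mem_Magnostic_iff.1 hM
  have : IsProbabilityMeasure (M.map Prod.fst) :=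
    Measure.isProbabilityMeasure_map measurable_fst.aemeasurable
  obtain ⟨g, hg⟩ := exists_forall_regLoss_le_integral_abs_sub (M := M)
    (fun g => integrable_lossFn hmeas (fun x => hbound _ (hevF g x)) hlabel)
    (fun f => integrable_lossFn hmeas (fun x => hbound _ (hevF' f x)) hlabel)
    (fun f g => (Integrable.of_finite (f := fun x => evF' f x - evF g x)).comp_measurable
      measurable_fst)
    (fun f g => hlabel.mono fun z hz => hlip _ hz _ (hevF' f z.1) _ (hevF g z.1))
  refine ⟨(M.map Prod.fst).toPMF, g, fun f => (hg f).trans_eq ?_⟩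
  exact (sum_toPMF_map_mul measurable_fst.aemeasurable fun x => |evF' f x - evF g x|).symm

theorem modelDC_abs_sub_Magnostic_le_pairDC [Nonempty F] :
    modelDC (fun y y' => |y - y'|) evF evF' (Magnostic X) Δ ≤ pairDC evF evF' Δ := by
  refine modelDC_Magnostic_le_pairDC (S := Set.univ) (fun _ _ => trivial) (fun _ _ => trivial)
    (measurable_fst.sub measurable_snd).abs (fun a _ => ⟨1 + |a|, fun y hy => ?_⟩)
    (fun y _ a _ b _ => ?_)
  · rw [abs_abs]
    exact (abs_sub y a).trans (by gcongr; exact abs_le.2 hy)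
  · simpa only [sub_sub_sub_cancel_left, abs_sub_comm b a] using
      abs_abs_sub_abs_le_abs_sub (y - a) (y - b)

theorem modelDC_abs_sub_Mrealizable_le_pairDC :
    modelDC (fun y y' => |y - y'|) evF evF' (Mrealizable evF) Δ ≤ pairDC evF evF' Δ := by
  refine modelDC_le_pairDC_of_regLoss_le fun M hM => ?_
  obtain ⟨_, g, hg⟩ := (mem_Mrealizable_iff fun g => measurable_of_finite (evF g)).1 hM
  have : IsProbabilityMeasure (M.map Prod.fst) :=
    Measure.isProbabilityMeasure_map measurable_fst.aemeasurable
  refine ⟨(M.map Prod.fst).toPMF, g, fun f => (regLoss_abs_sub_eq_integral hg f).trans_le ?_⟩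
  exact (sum_toPMF_map_mul measurable_fst.aemeasurable fun x => |evF' f x - evF g x|).ge

theorem pairDC_le_modelDC_abs_sub_Mrealizable :
    pairDC evF evF' Δ ≤ modelDC (fun y y' => |y - y'|) evF evF' (Mrealizable evF) Δ := by
  refine pairDC_le_modelDC_of_le_regLoss fun μ g => ?_
  have hgraph : Measurable fun x => (x, evF g x) := measurable_of_finite _
  have hrealized : ∀ᵐ z ∂μ.toMeasure.map fun x => (x, evF g x), z.2 = evF g z.1 :=
    (ae_map_iff hgraph.aemeasurable (measurableSet_eq_fun measurable_snd
      ((measurable_of_finite (evF g)).comp measurable_fst))).2 (.of_forall fun _ => rfl)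
  refine ⟨μ.toMeasure.map fun x => (x, evF g x),
    (mem_Mrealizable_iff fun g => measurable_of_finite (evF g)).2
      ⟨Measure.isProbabilityMeasure_map hgraph.aemeasurable, g, hrealized⟩, fun f => ?_⟩
  have hdist : Measurable fun z : X × ℝ => |evF' f z.1 - evF g z.1| :=
    (measurable_of_finite fun x => |evF' f x - evF g x|).comp measurable_fst
  rw [regLoss_abs_sub_eq_integral hrealized, integral_map hgraph.aemeasurable
    hdist.aestronglyMeasurable, PMF.integral_eq_sum]
  simp only [smul_eq_mul, le_refl]

end CoveringNumbers

theorem regression_fracCov_general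
    {X F F' : Type*} [Fintype X] [MeasurableSpace X] [MeasurableSingletonClass X]
    [Fintype F] [Nonempty F]
    (evF : F → X → ℝ) (hevF : ∀ g x, evF g x ∈ Set.Icc (-1 : ℝ) 1)
    {S : Set ℝ} (hS : Set.Icc (-1 : ℝ) 1 ⊆ S)
    (evF' : F' → X → ℝ) (hevF' : ∀ f x, evF' f x ∈ S) (Δ : ℝ)
    (lossFn : ℝ → ℝ → ℝ) (hmeas : Measurable (Function.uncurry lossFn))
    (hbound : ∀ a ∈ S, ∃ C, ∀ y ∈ Set.Icc (-1 : ℝ) 1, |lossFn y a| ≤ C) :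
    ((∀ y ∈ Set.Icc (-1 : ℝ) 1, ∀ a ∈ S, ∀ b ∈ S, |lossFn y a - lossFn y b| ≤ |a - b|) →
      modelDC lossFn evF evF' (Magnostic X) Δ ≤ pairDC evF evF' Δ) ∧
    modelDC (fun y y' => |y - y'|) evF evF' (Magnostic X) Δ = pairDC evF evF' Δ ∧
    modelDC (fun y y' => |y - y'|) evF evF' (Mrealizable evF) Δ = pairDC evF evF' Δ :=
  ⟨modelDC_Magnostic_le_pairDC (fun g x => hS (hevF g x)) hevF' hmeas hbound,
    le_antisymm modelDC_abs_sub_Magnostic_le_pairDC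
      (pairDC_le_modelDC_abs_sub_Mrealizable.trans
        (modelDC_mono (Mrealizable_subset_Magnostic hevF))),
    le_antisymm modelDC_abs_sub_Mrealizable_le_pairDC pairDC_le_modelDC_abs_sub_Mrealizable⟩

/-- **Fractional covering numbers for agnostic and realizable regression.** Let `X` be a
finite set, `F` (finite, nonempty) and `F⁺` (countable) classes of functions `X → [−1,1]`,
and `Δ > 0`.  Then: (i) if `𝓛(y,·)` is 1-Lipschitz for every `y ∈ [−1,1]`, then
`DC_Δ(M_agnostic) ≤ DC_Δ(F, F⁺)`; (ii) for the absolute loss `𝓛(y,y') = |y − y'|`,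
`DC_Δ(M_agnostic) = DC_Δ(F, F⁺) = DC_Δ(M_realizable)`. -/
theorem regression_fracCov
    {X F F' : Type*} [Fintype X] [MeasurableSpace X] [MeasurableSingletonClass X]
    [Fintype F] [Nonempty F] [Countable F']
    (evF : F → X → ℝ) (hevF : ∀ g x, evF g x ∈ Set.Icc (-1 : ℝ) 1)
    (evF' : F' → X → ℝ) (hevF' : ∀ f x, evF' f x ∈ Set.Icc (-1 : ℝ) 1)
    (Δ : ℝ) (hΔ : 0 < Δ)
    (lossFn : ℝ → ℝ → ℝ) (hmeas : Measurable (Function.uncurry lossFn))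
    (hrange : ∀ y ∈ Set.Icc (-1 : ℝ) 1, ∀ y' ∈ Set.Icc (-1 : ℝ) 1,
      lossFn y y' ∈ Set.Icc (0 : ℝ) 1) :
    ((∀ y ∈ Set.Icc (-1 : ℝ) 1, ∀ a ∈ Set.Icc (-1 : ℝ) 1, ∀ b ∈ Set.Icc (-1 : ℝ) 1,
        |lossFn y a - lossFn y b| ≤ |a - b|) →
      modelDC lossFn evF evF' (Magnostic X) Δ ≤ pairDC evF evF' Δ) ∧
    modelDC (fun y y' => |y - y'|) evF evF' (Magnostic X) Δ = pairDC evF evF' Δ ∧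
    modelDC (fun y y' => |y - y'|) evF evF' (Mrealizable evF) Δ = pairDC evF evF' Δ :=
  regression_fracCov_general evF hevF subset_rfl evF' hevF' Δ lossFn hmeas fun a ha =>
    ⟨1, fun y hy => (abs_of_nonneg (hrange y hy a ha).1).trans_le (hrange y hy a ha).2⟩
end

section
/- Separation between proper and improper linear regression via fractional covering numbers: Let X be the closed Euclidean unit ball of ℝ^d, let F_Lin := { f_θ = ⟨θ, ·⟩ : θ ∈ ℝ^d, ‖θ‖ ≤ 1 } and F_Lin⁺ := { f_θ = ⟨θ, ·⟩ : θ ∈ ℝ^d }. Then: (i) there exist universal constants c > 0 and d₀ such that for all d ≥ d₀, log DC_{1/2}(F_Lin, F_Lin) ≥ c·d; (ii) there exist universal constants C₀ and Δ₀ ∈ (0,1) such that for all d ≥ 1 and all Δ ∈ (0, Δ₀], log DC_Δ(F_Lin, F_Lin⁺) ≤ (C₀/Δ²)·log(1/Δ). -/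
open MeasureTheory
open scoped ENNReal RealInnerProductSpace

/-- The fractional covering number `DC_Δ(F_Lin, F_Lin)` for *proper* linear regression on
the unit ball `X = B^d(1)`: distributions `p` range over Borel probability measures on the
parameter unit ball, `μ` over Borel probability measures on `X`, and `θ*` over the unit
ball; the covered set is `{θ : E_{x∼μ} |⟨θ − θ*, x⟩| ≤ Δ}`. -/
noncomputable def dcProperLin (d : ℕ) (Δ : ℝ) : ℝ≥0∞ :=
  ⨅ p : {p : Measure {θ : EuclideanSpace ℝ (Fin d) // ‖θ‖ ≤ 1} // IsProbabilityMeasure p},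
    ⨆ (μ : {μ : Measure {x : EuclideanSpace ℝ (Fin d) // ‖x‖ ≤ 1} //
        IsProbabilityMeasure μ})
      (θs : {θ : EuclideanSpace ℝ (Fin d) // ‖θ‖ ≤ 1}),
      (p.1 {θ | (∫ x, |⟪(θ : EuclideanSpace ℝ (Fin d)) - (θs : EuclideanSpace ℝ (Fin d)),
          (x : EuclideanSpace ℝ (Fin d))⟫| ∂μ.1) ≤ Δ})⁻¹

/-- The fractional covering number `DC_Δ(F_Lin, F_Lin⁺)` for *improper* linear regression:
here `p` ranges over Borel probability measures on all of `ℝ^d`. -/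
noncomputable def dcImproperLin (d : ℕ) (Δ : ℝ) : ℝ≥0∞ :=
  ⨅ p : {p : Measure (EuclideanSpace ℝ (Fin d)) // IsProbabilityMeasure p},
    ⨆ (μ : {μ : Measure {x : EuclideanSpace ℝ (Fin d) // ‖x‖ ≤ 1} //
        IsProbabilityMeasure μ})
      (θs : {θ : EuclideanSpace ℝ (Fin d) // ‖θ‖ ≤ 1}),
      (p.1 {θ | (∫ x, |⟪θ - (θs : EuclideanSpace ℝ (Fin d)),
          (x : EuclideanSpace ℝ (Fin d))⟫| ∂μ.1) ≤ Δ})⁻¹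

/-!
**Lower bound.** Against a prior `p` on the unit ball, test with a point mass at a unit vector `v`
and `θ* = v`: the covered parameters satisfy `⟪θ, v⟫ ≥ 1 - Δ`. For a uniformly random sign vector
`v ∈ {± 1 / √d}^d` and a fixed `‖θ‖ ≤ 1`, Hoeffding's inequality bounds the probability of this
event by `exp (-d (1 - Δ)² / 2)`, so some `v` has covered mass at most that under `p`.

**Upper bound.** Take `p` Gaussian with covariance `(Δ / 2)² I`. The centred set
`{θ : E_μ |⟪θ, x⟫| ≤ Δ}` has mass at least `1 / 2` by Fubini and Markov, in every dimension, and it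
is symmetric. After rescaling to a standard Gaussian, moving the set to `θ*` is a shift by `v` with
`‖v‖ ≤ 2 / Δ`, of Cameron–Martin density `exp (⟪v, ·⟫ - ‖v‖² / 2)`; averaging this density over
`± θ` and using `cosh ≥ 1`, the shift costs a factor of at most `exp (2 / Δ²)`. Improperness is
essential here, since `p` concentrates at norm about `Δ √d / 2`.
-/

open ProbabilityTheory

section Averaging

variable {α β : Type*} [MeasurableSpace α] [MeasurableSpace β]

lemma exists_measure_section_le_of_forall_measure_section_le (p : Measure α)
    [IsProbabilityMeasure p] (q : Measure β) [IsProbabilityMeasure q] {A : Set (α × β)}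
    (hA : MeasurableSet A) {δ : ℝ≥0∞} (hδ : ∀ a, q {b | (a, b) ∈ A} ≤ δ) :
    ∃ b, p {a | (a, b) ∈ A} ≤ δ := by
  obtain ⟨b, hb⟩ := exists_le_lintegral (μ := q)
    (measurable_measure_prodMk_right (μ := p) hA).aemeasurable
  refine ⟨b, hb.trans ?_⟩
  calc ∫⁻ b, p {a | (a, b) ∈ A} ∂q = ∫⁻ a, q {b | (a, b) ∈ A} ∂p :=
        (Measure.prod_apply_symm hA).symm.trans (Measure.prod_apply hA)
    _ ≤ ∫⁻ _, δ ∂p := lintegral_mono hδ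
    _ = δ := by simp

end Averaging

section SignVector

variable {ι : Type*} [Fintype ι]

/-- The vector with coordinates `± 1 / √n`, where `n = card ι`: the hard instances for proper
regression. It has norm one unless `ι` is empty; `true` encodes the sign `+`. -/
noncomputable def signVector (ε : ι → Bool) : EuclideanSpace ℝ ι :=
  WithLp.toLp 2 fun i => (if ε i then 1 else -1) / √(Fintype.card ι)

/-- The law of independent fair signs indexed by `ι`, from which the hard instance `signVector` is
drawn. -/
noncomputable def fairSigns (ι : Type*) [Fintype ι] : Measure (ι → Bool) :=
  Measure.pi fun _ => (PMF.uniformOfFintype Bool).toMeasure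

instance : IsProbabilityMeasure (fairSigns ι) := by
  unfold fairSigns
  infer_instance

lemma norm_signVector [Nonempty ι] (ε : ι → Bool) : ‖signVector ε‖ = 1 := by
  have hcoord (i : ι) : signVector ε i ^ 2 = 1 / Fintype.card ι := by
    simp only [signVector]
    split_ifs <;> simp [div_pow]
  simp [EuclideanSpace.norm_eq, hcoord]

lemma hasSubgaussianMGF_sign_fairSigns (i : ι) :
    HasSubgaussianMGF (fun ε => if ε i then (1 : ℝ) else -1) 1 (fairSigns ι) := by
  have hsign : HasSubgaussianMGF (fun b : Bool => if b then (1 : ℝ) else -1) 1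
      (PMF.uniformOfFintype Bool).toMeasure := by
    have hoeffding := hasSubgaussianMGF_of_mem_Icc_of_integral_eq_zero
      (μ := (PMF.uniformOfFintype Bool).toMeasure) (X := fun b => if b then (1 : ℝ) else -1)
      (a := -1) (b := 1) (by fun_prop) (.of_forall fun b => by cases b <;> simp)
      (by simp [PMF.integral_eq_sum])
    convert hoeffding
    ext
    norm_num
  have heval := measurePreserving_eval (fun _ : ι => (PMF.uniformOfFintype Bool).toMeasure) i
  exact HasSubgaussianMGF.of_map heval.aemeasurable (by rwa [heval.map_eq])

lemma hasSubgaussianMGF_inner_signVector (θ : EuclideanSpace ℝ ι) :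
    HasSubgaussianMGF (fun ε => ⟪θ, signVector ε⟫) (‖θ‖₊ ^ 2 / Fintype.card ι) (fairSigns ι) := by
  have hindep : iIndepFun (fun i (ε : ι → Bool) =>
      θ i / √(Fintype.card ι) * (if ε i then (1 : ℝ) else -1)) (fairSigns ι) :=
    iIndepFun_pi (X := fun i (b : Bool) => θ i / √(Fintype.card ι) * (if b then (1 : ℝ) else -1))
      fun i => by fun_prop
  convert HasSubgaussianMGF.sum_of_iIndepFun hindep (s := Finset.univ)
    fun i _ => (hasSubgaussianMGF_sign_fairSigns i).const_mul _ using 1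
  · ext ε
    simp only [PiLp.inner_apply, signVector, RCLike.inner_apply, conj_trivial]
    exact Finset.sum_congr rfl fun i _ => by ring
  · ext
    push_cast
    rw [EuclideanSpace.real_norm_sq_eq, Finset.sum_div]
    refine Finset.sum_congr rfl fun i _ => ?_
    change θ i ^ 2 / Fintype.card ι = (θ i / √(Fintype.card ι)) ^ 2 * 1
    rw [mul_one, div_pow, Real.sq_sqrt (Nat.cast_nonneg _)]

lemma fairSigns_le_inner_signVector_le {θ : EuclideanSpace ℝ ι} (hθ : ‖θ‖ ≤ 1)
    {t : ℝ} (ht : 0 ≤ t) :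
    fairSigns ι {ε | t ≤ ⟪θ, signVector ε⟫} ≤
      ENNReal.ofReal (Real.exp (-(Fintype.card ι * t ^ 2 / 2))) := by
  have hsub :
      HasSubgaussianMGF (fun ε => ⟪θ, signVector ε⟫) (1 / Fintype.card ι) (fairSigns ι) := by
    have h := hasSubgaussianMGF_inner_signVector θ
    refine ⟨h.integrable_exp_mul, fun s => (h.mgf_le s).trans ?_⟩
    push_cast
    gcongr
    exact pow_le_one₀ (norm_nonneg θ) hθ
  rw [← ofReal_measureReal]
  refine ENNReal.ofReal_le_ofReal ((hsub.measure_ge_le ht).trans_eq ?_)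
  congr 1
  push_cast
  field_simp

end SignVector

section Tilted

variable {α β : Type*} [MeasurableSpace α] [MeasurableSpace β]

lemma map_tilted_measurableEquiv (μ : Measure α) (e : α ≃ᵐ β) (f : α → ℝ) :
    (μ.tilted f).map e = (μ.map e).tilted (f ∘ e.symm) := by
  ext s hs
  rw [e.map_apply, tilted_apply' _ _ (e.measurable hs), tilted_apply' _ _ hs, e.restrict_map,
    lintegral_map_equiv, integral_map_equiv]
  simp

lemma tilted_add_const {μ : Measure α} [NeZero μ] {f : α → ℝ}
    (hf : Integrable (fun x => Real.exp (f x)) μ) (c : ℝ) :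
    μ.tilted (fun x => f x + c) = μ.tilted f := by
  have := isProbabilityMeasure_tilted hf
  exact (tilted_tilted hf fun _ => c).symm.trans (tilted_const _ c)

lemma measure_le_setLIntegral_exp_of_odd [InvolutiveNeg α] [MeasurableNeg α] (μ : Measure α)
    [μ.IsNegInvariant] {f : α → ℝ} (hf : Measurable f) (hodd : ∀ x, f (-x) = -f x)
    {s : Set α} (hs : -s = s) :
    μ s ≤ ∫⁻ x in s, ENNReal.ofReal (Real.exp (f x)) ∂μ := by
  have hreflect : ∫⁻ x in s, ENNReal.ofReal (Real.exp (-f x)) ∂μ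
      = ∫⁻ x in s, ENNReal.ofReal (Real.exp (f x)) ∂μ := by
    simpa only [hodd, Set.neg_preimage, hs] using
      (Measure.measurePreserving_neg μ).setLIntegral_comp_preimage_emb
        (MeasurableEquiv.neg α).measurableEmbedding (fun x => ENNReal.ofReal (Real.exp (f x))) s
  have hcosh (x : α) : (2 : ℝ≥0∞) ≤
      ENNReal.ofReal (Real.exp (f x)) + ENNReal.ofReal (Real.exp (-f x)) := by
    rw [← ENNReal.ofReal_add (Real.exp_nonneg _) (Real.exp_nonneg _), ENNReal.ofNat_le_ofReal]
    linarith [Real.one_le_cosh (f x), Real.cosh_eq (f x)]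
  refine (ENNReal.mul_le_mul_iff_right two_ne_zero ENNReal.ofNat_ne_top).1 ?_
  calc 2 * μ s = ∫⁻ _ in s, 2 ∂μ := by simp
    _ ≤ ∫⁻ x in s, ENNReal.ofReal (Real.exp (f x)) + ENNReal.ofReal (Real.exp (-f x)) ∂μ :=
        lintegral_mono hcosh
    _ = 2 * ∫⁻ x in s, ENNReal.ofReal (Real.exp (f x)) ∂μ := by
        rw [lintegral_add_left (by fun_prop), hreflect, two_mul]

end Tilted

lemma half_le_measure_le_of_two_mul_integral_le {Ω : Type*} [MeasurableSpace Ω]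
    {μ : Measure Ω} [IsProbabilityMeasure μ] {f : Ω → ℝ} (hf : 0 ≤ᵐ[μ] f)
    (hfi : Integrable f μ) {r : ℝ} (hr : 0 < r) (hfr : 2 * ∫ ω, f ω ∂μ ≤ r) :
    2⁻¹ ≤ μ {ω | f ω ≤ r} := by
  have hmarkov : μ.real {ω | r ≤ f ω} ≤ 1 / 2 := by
    nlinarith [mul_meas_ge_le_integral_of_nonneg hf hfi r]
  have hcover : {ω | r ≤ f ω} ∪ {ω | f ω ≤ r} = Set.univ := by
    ext ω
    simp [le_total]
  have hunion := measureReal_union_le (μ := μ) {ω | r ≤ f ω} {ω | f ω ≤ r}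
  rw [hcover, probReal_univ] at hunion
  rw [← ofReal_measureReal, ENNReal.le_ofReal_iff_toReal_le (by simp) measureReal_nonneg,
    ENNReal.toReal_inv, ENNReal.toReal_ofNat]
  linarith

section StdGaussian

variable {E : Type*} [NormedAddCommGroup E] [InnerProductSpace ℝ E] [FiniteDimensional ℝ E]
  [MeasurableSpace E] [BorelSpace E]

lemma integrable_exp_neg_norm_sq_div_two :
    Integrable fun x : E => Real.exp (-‖x‖ ^ 2 / 2) := by
  have hreal := GaussianFourier.integral_rexp_neg_mul_sq_norm (V := E) (b := 1 / 2) (by norm_num)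
  have hpos : 0 < (Real.pi / (1 / 2)) ^ (Module.finrank ℝ E / 2 : ℝ) := by positivity
  convert Integrable.of_integral_ne_zero (hreal.trans_ne hpos.ne') using 3
  ring

lemma integral_cexp_neg_norm_sq_div_two_add_inner_mul_I (t : E) :
    ∫ x : E, Complex.exp (-(‖x‖ : ℂ) ^ 2 / 2 + ⟪x, t⟫ * Complex.I) =
      (∫ x : E, Real.exp (-‖x‖ ^ 2 / 2) : ℝ) * Complex.exp (-(‖t‖ : ℂ) ^ 2 / 2) := by
  have hb : 0 < (1 / 2 : ℂ).re := by norm_num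
  have hnormalizer : ((∫ x : E, Real.exp (-‖x‖ ^ 2 / 2) : ℝ) : ℂ)
      = (Real.pi / (1 / 2 : ℂ)) ^ (Module.finrank ℝ E / 2 : ℂ) := by
    rw [← GaussianFourier.integral_cexp_neg_mul_sq_norm hb, ← integral_complex_ofReal]
    refine integral_congr_ae (.of_forall fun x => ?_)
    push_cast
    ring_nf
  rw [hnormalizer]
  convert GaussianFourier.integral_cexp_neg_mul_sq_norm_add hb Complex.I t using 4 with x
  · rw [real_inner_comm t]
    ring
  · rw [Complex.I_sq]
    ring
  · norm_num

lemma stdGaussian_eq_tilted :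
    stdGaussian E = volume.tilted fun x => -‖x‖ ^ 2 / 2 := by
  have := isProbabilityMeasure_tilted (integrable_exp_neg_norm_sq_div_two (E := E))
  have hpos := integral_exp_pos (integrable_exp_neg_norm_sq_div_two (E := E))
  refine Measure.ext_of_charFun (funext fun t => ?_)
  symm
  calc charFun (volume.tilted fun x => -‖x‖ ^ 2 / 2) t
      = ∫ x : E, ((∫ x : E, Real.exp (-‖x‖ ^ 2 / 2) : ℝ) : ℂ)⁻¹ *
          Complex.exp (-(‖x‖ : ℂ) ^ 2 / 2 + ⟪x, t⟫ * Complex.I) := by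
        rw [charFun_apply, integral_tilted]
        refine integral_congr_ae (.of_forall fun x => ?_)
        simp only [Complex.real_smul, Complex.exp_add]
        push_cast
        ring
    _ = Complex.exp (-(‖t‖ : ℂ) ^ 2 / 2) := by
        rw [integral_const_mul, integral_cexp_neg_norm_sq_div_two_add_inner_mul_I,
          inv_mul_cancel_left₀ (mod_cast hpos.ne')]
    _ = charFun (stdGaussian E) t := (charFun_stdGaussian t).symm

instance : (stdGaussian E).IsNegInvariant :=
  ⟨stdGaussian_map (LinearIsometryEquiv.neg ℝ)⟩

lemma map_inner_stdGaussian (v : E) :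
    (stdGaussian E).map (fun x => ⟪v, x⟫) = gaussianReal 0 (‖v‖₊ ^ 2) := by
  have h := IsGaussian.map_eq_gaussianReal (μ := stdGaussian E) (innerSL ℝ v)
  rw [integral_strongDual_stdGaussian, variance_dual_stdGaussian, innerSL_apply_norm] at h
  rwa [Real.toNNReal_pow (norm_nonneg v), norm_toNNReal] at h

lemma integral_exp_inner_stdGaussian (v : E) :
    ∫ x, Real.exp ⟪v, x⟫ ∂stdGaussian E = Real.exp (‖v‖ ^ 2 / 2) := by
  simpa [mgf] using mgf_gaussianReal (map_inner_stdGaussian v) 1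

/-- The finite-dimensional **Cameron–Martin formula**, by completing the square. -/
lemma map_add_const_stdGaussian (v : E) :
    (stdGaussian E).map (· + v) = (stdGaussian E).tilted fun x => ⟪v, x⟫ := by
  have hq := integrable_exp_neg_norm_sq_div_two (E := E)
  have hsquare (x : E) : -‖x - v‖ ^ 2 / 2 = (-‖x‖ ^ 2 / 2 + ⟪v, x⟫) + -‖v‖ ^ 2 / 2 := by
    rw [norm_sub_sq_real, real_inner_comm]
    ring
  have hq_inner : Integrable fun x : E => Real.exp (-‖x‖ ^ 2 / 2 + ⟪v, x⟫) := by
    convert (hq.comp_sub_right v).mul_const (Real.exp (‖v‖ ^ 2 / 2)) using 2 with x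
    rw [← Real.exp_add, hsquare]
    ring_nf
  calc (stdGaussian E).map (· + v)
      = (volume.map (· + v)).tilted fun x => -‖x - v‖ ^ 2 / 2 := by
        rw [stdGaussian_eq_tilted]
        simpa [Function.comp_def, sub_eq_add_neg] using
          map_tilted_measurableEquiv volume (MeasurableEquiv.addRight v) fun x => -‖x‖ ^ 2 / 2
    _ = volume.tilted fun x => (-‖x‖ ^ 2 / 2 + ⟪v, x⟫) + -‖v‖ ^ 2 / 2 := by
        simp only [map_add_right_eq_self, hsquare]
    _ = volume.tilted fun x => -‖x‖ ^ 2 / 2 + ⟪v, x⟫ := tilted_add_const hq_inner _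
    _ = (stdGaussian E).tilted fun x => ⟪v, x⟫ := by
        rw [stdGaussian_eq_tilted, tilted_tilted hq]
        rfl

lemma exp_mul_stdGaussian_le_preimage_sub (v : E) {s : Set E} (hs : -s = s) :
    ENNReal.ofReal (Real.exp (-(‖v‖ ^ 2 / 2))) * stdGaussian E s ≤
      stdGaussian E ((· - v) ⁻¹' s) := by
  calc ENNReal.ofReal (Real.exp (-(‖v‖ ^ 2 / 2))) * stdGaussian E s
      ≤ ENNReal.ofReal (Real.exp (-(‖v‖ ^ 2 / 2))) *
          ∫⁻ x in s, ENNReal.ofReal (Real.exp ⟪-v, x⟫) ∂stdGaussian E := by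
        gcongr
        exact measure_le_setLIntegral_exp_of_odd _ (by fun_prop) (inner_neg_right (-v)) hs
    _ = (stdGaussian E).tilted (fun x => ⟪-v, x⟫) s := by
        rw [tilted_apply, integral_exp_inner_stdGaussian, ← lintegral_const_mul _ (by fun_prop)]
        refine lintegral_congr fun x => ?_
        rw [← ENNReal.ofReal_mul (Real.exp_nonneg _), Real.exp_neg, norm_neg, inv_mul_eq_div]
    _ = (stdGaussian E).map (· + -v) s := by rw [map_add_const_stdGaussian]
    _ = stdGaussian E ((· - v) ⁻¹' s) := by
        simpa [sub_eq_add_neg] using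
          (MeasurableEquiv.addRight (-v)).map_apply (μ := stdGaussian E) s

lemma integral_abs_inner_stdGaussian_le (v : E) :
    ∫ x, |⟪v, x⟫| ∂stdGaussian E ≤ ‖v‖ := by
  have hL2 : MemLp (fun x => ⟪v, x⟫) 2 (stdGaussian E) :=
    IsGaussian.memLp_dual _ (innerSL ℝ v) 2 (by simp)
  have hsecond : ∫ x, ⟪v, x⟫ ^ 2 ∂stdGaussian E = ‖v‖ ^ 2 := by
    have hvar := variance_dual_stdGaussian (innerSL ℝ v)
    rw [variance_of_integral_eq_zero (by fun_prop) (integral_strongDual_stdGaussian _),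
      innerSL_apply_norm] at hvar
    simpa using hvar
  have hvar_abs := variance_nonneg (fun x => |⟪v, x⟫|) (stdGaussian E)
  rw [variance_eq_sub (by exact hL2.abs)] at hvar_abs
  simp only [Pi.pow_apply, sq_abs, hsecond] at hvar_abs
  exact le_of_sq_le_sq (by linarith) (norm_nonneg v)

lemma half_le_stdGaussian_integral_abs_inner_le {Ω : Type*} [MeasurableSpace Ω] {μ : Measure Ω}
    [SFinite μ] {X : Ω → E} (hX : Integrable X μ) {r : ℝ} (hr : 0 < r)
    (hXr : 2 * ∫ ω, ‖X ω‖ ∂μ ≤ r) :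
    2⁻¹ ≤ stdGaussian E {v | ∫ ω, |⟪v, X ω⟫| ∂μ ≤ r} := by
  have hprod : Integrable (fun z : E × Ω => |⟪z.1, X z.2⟫|) ((stdGaussian E).prod μ) := by
    have hid : Integrable id (stdGaussian E) := IsGaussian.integrable_id
    have hinner : AEStronglyMeasurable (fun z : E × Ω => ⟪z.1, X z.2⟫) ((stdGaussian E).prod μ) :=
      hid.aestronglyMeasurable.comp_fst.inner hX.aestronglyMeasurable.comp_snd
    refine (hid.norm.mul_prod hX.norm).mono' hinner.norm (.of_forall fun z => ?_)
    simpa using abs_real_inner_le_norm z.1 (X z.2)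
  refine half_le_measure_le_of_two_mul_integral_le (.of_forall fun v => by positivity)
    hprod.integral_prod_left hr (le_trans ?_ hXr)
  gcongr
  calc ∫ v, ∫ ω, |⟪v, X ω⟫| ∂μ ∂stdGaussian E
      = ∫ ω, ∫ v, |⟪X ω, v⟫| ∂stdGaussian E ∂μ := by
        simp only [real_inner_comm]
        exact integral_integral_swap hprod
    _ ≤ ∫ ω, ‖X ω‖ ∂μ :=
        integral_mono_of_nonneg (.of_forall fun ω => by positivity) hX.norm
          (.of_forall fun ω => integral_abs_inner_stdGaussian_le (X ω))

lemma exp_div_two_le_map_smul_stdGaussian {Ω : Type*} [MeasurableSpace Ω] {μ : Measure Ω}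
    [SFinite μ] {X : Ω → E} (hX : Integrable X μ) (hX_mean : ∫ ω, ‖X ω‖ ∂μ ≤ 1) (θ : E)
    {Δ : ℝ} (hΔ : 0 < Δ) :
    ENNReal.ofReal (Real.exp (-(2 * ‖θ‖ ^ 2 / Δ ^ 2))) / 2 ≤
      (stdGaussian E).map ((Δ / 2) • ·) {v | ∫ ω, |⟪v - θ, X ω⟫| ∂μ ≤ Δ} := by
  let s := {v : E | ∫ ω, |⟪v, X ω⟫| ∂μ ≤ 2}
  have hs_neg : -s = s := by
    ext v
    simp [s]
  have hs_mass : 2⁻¹ ≤ stdGaussian E s :=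
    half_le_stdGaussian_integral_abs_inner_le hX two_pos (by linarith)
  have hnorm : ‖(2 / Δ) • θ‖ ^ 2 / 2 = 2 * ‖θ‖ ^ 2 / Δ ^ 2 := by
    rw [norm_smul, mul_pow, Real.norm_eq_abs, sq_abs]
    ring
  have hpreimage : (· - (2 / Δ) • θ) ⁻¹' s ⊆
      ((Δ / 2) • ·) ⁻¹' {v | ∫ ω, |⟪v - θ, X ω⟫| ∂μ ≤ Δ} := by
    intro v (hv : ∫ ω, |⟪v - (2 / Δ) • θ, X ω⟫| ∂μ ≤ 2)
    have hrescale : (Δ / 2) • v - θ = (Δ / 2) • (v - (2 / Δ) • θ) := by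
      rw [smul_sub, ← inv_div Δ 2, smul_inv_smul₀ (by positivity)]
    change ∫ ω, |⟪(Δ / 2) • v - θ, X ω⟫| ∂μ ≤ Δ
    simp only [hrescale, real_inner_smul_left, abs_mul, abs_of_pos (half_pos hΔ),
      integral_const_mul]
    nlinarith
  calc ENNReal.ofReal (Real.exp (-(2 * ‖θ‖ ^ 2 / Δ ^ 2))) / 2
      ≤ ENNReal.ofReal (Real.exp (-(‖(2 / Δ) • θ‖ ^ 2 / 2))) * stdGaussian E s := by
        rw [hnorm, div_eq_mul_inv]
        gcongr
    _ ≤ stdGaussian E ((· - (2 / Δ) • θ) ⁻¹' s) := exp_mul_stdGaussian_le_preimage_sub _ hs_neg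
    _ ≤ stdGaussian E (((Δ / 2) • ·) ⁻¹' {v | ∫ ω, |⟪v - θ, X ω⟫| ∂μ ≤ Δ}) :=
        measure_mono hpreimage
    _ ≤ _ := Measure.le_map_apply (by fun_prop) _

end StdGaussian

section CoveringNumbers

variable {d : ℕ} {Δ : ℝ}

lemma one_sub_le_inner_of_abs_inner_sub_le {E : Type*} [NormedAddCommGroup E]
    [InnerProductSpace ℝ E] {v θ : E} (hv : ‖v‖ = 1) (h : |⟪θ - v, v⟫| ≤ Δ) :
    1 - Δ ≤ ⟪θ, v⟫ := by
  rw [inner_sub_left, real_inner_self_eq_norm_sq, hv] at h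
  linarith [neg_le_of_abs_le h]

lemma ofReal_exp_le_dcProperLin (hd : d ≠ 0) (hΔ : Δ ≤ 1) :
    ENNReal.ofReal (Real.exp (d * (1 - Δ) ^ 2 / 2)) ≤ dcProperLin d Δ := by
  have : NeZero d := ⟨hd⟩
  refine le_iInf fun ⟨p, hp⟩ => ?_
  have hmeas : MeasurableSet {z : {θ : EuclideanSpace ℝ (Fin d) // ‖θ‖ ≤ 1} × (Fin d → Bool) |
      1 - Δ ≤ ⟪(z.1 : EuclideanSpace ℝ (Fin d)), signVector z.2⟫} :=
    measurableSet_le measurable_const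
      (measurable_fst.subtype_val.inner ((measurable_of_finite signVector).comp measurable_snd))
  obtain ⟨ε, hε⟩ := exists_measure_section_le_of_forall_measure_section_le p (fairSigns (Fin d))
    hmeas fun θ => fairSigns_le_inner_signVector_le θ.2 (sub_nonneg.2 hΔ)
  let v : {x : EuclideanSpace ℝ (Fin d) // ‖x‖ ≤ 1} := ⟨signVector ε, (norm_signVector ε).le⟩
  refine le_iSup₂_of_le ⟨Measure.dirac v, inferInstance⟩ v ?_
  rw [ENNReal.le_inv_iff_le_inv, ← ENNReal.ofReal_inv_of_pos (Real.exp_pos _), ← Real.exp_neg]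
  refine (measure_mono fun θ hθ => ?_).trans (hε.trans_eq (by rw [Fintype.card_fin]))
  rw [Set.mem_ofPred_eq, integral_dirac] at hθ
  exact one_sub_le_inner_of_abs_inner_sub_le (norm_signVector ε) hθ

lemma dcImproperLin_le_ofReal_exp (d : ℕ) (hΔ : 0 < Δ) :
    dcImproperLin d Δ ≤ ENNReal.ofReal (2 * Real.exp (2 / Δ ^ 2)) := by
  have hscale : Measurable fun v : EuclideanSpace ℝ (Fin d) => (Δ / 2) • v := by fun_prop
  refine iInf_le_of_le ⟨(stdGaussian _).map ((Δ / 2) • ·),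
    Measure.isProbabilityMeasure_map hscale.aemeasurable⟩ (iSup₂_le fun ⟨μ, hμ⟩ ⟨θ, hθ⟩ => ?_)
  have hint : Integrable (fun x : {x : EuclideanSpace ℝ (Fin d) // ‖x‖ ≤ 1} => x.1) μ :=
    .of_bound (by fun_prop) 1 (.of_forall fun x => x.2)
  have hmean : ∫ x, ‖x.1‖ ∂μ ≤ 1 := by
    simpa using integral_mono hint.norm (integrable_const 1) fun x => x.2
  rw [ENNReal.inv_le_iff_inv_le]
  calc (ENNReal.ofReal (2 * Real.exp (2 / Δ ^ 2)))⁻¹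
      = ENNReal.ofReal (Real.exp (-(2 * 1 ^ 2 / Δ ^ 2))) / 2 := by
        rw [← ENNReal.ofReal_inv_of_pos (by positivity), mul_inv, ← Real.exp_neg,
          inv_mul_eq_div, ENNReal.ofReal_div_of_pos two_pos, ENNReal.ofReal_ofNat, one_pow, mul_one]
    _ ≤ ENNReal.ofReal (Real.exp (-(2 * ‖θ‖ ^ 2 / Δ ^ 2))) / 2 := by gcongr
    _ ≤ _ := exp_div_two_le_map_smul_stdGaussian hint hmean θ hΔ

end CoveringNumbers

lemma log_two_add_two_div_sq_le {Δ : ℝ} (hΔ : 0 < Δ) (hΔ₀ : Δ ≤ 1 / 2) :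
    Real.log 2 + 2 / Δ ^ 2 ≤ 4 / Δ ^ 2 * Real.log (1 / Δ) := by
  have hlog : Real.log 2 ≤ Real.log (1 / Δ) :=
    Real.log_le_log two_pos ((le_div_iff₀ hΔ).2 (by linarith))
  calc Real.log 2 + 2 / Δ ^ 2 = (Real.log 2 * Δ ^ 2 + 2) / Δ ^ 2 := by field_simp
    _ ≤ 4 * Real.log 2 / Δ ^ 2 := by
        gcongr
        have hΔ_sq : Δ ^ 2 ≤ (1 / 2) ^ 2 := by gcongr
        nlinarith [Real.log_two_gt_d9]
    _ = 4 / Δ ^ 2 * Real.log 2 := by ring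
    _ ≤ 4 / Δ ^ 2 * Real.log (1 / Δ) := by gcongr

theorem proper_improper_linear_separation_general :
    (∀ d : ℕ, d ≠ 0 → ∀ Δ : ℝ, Δ ≤ 1 →
      ((d * (1 - Δ) ^ 2 / 2 : ℝ) : EReal) ≤ ENNReal.log (dcProperLin d Δ)) ∧
    (∀ d : ℕ, ∀ Δ : ℝ, 0 < Δ →
      ENNReal.log (dcImproperLin d Δ) ≤ ((Real.log 2 + 2 / Δ ^ 2 : ℝ) : EReal)) := by
  refine ⟨fun d hd Δ hΔ => ?_, fun d Δ hΔ => ?_⟩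
  · have h := ENNReal.log_le_log (ofReal_exp_le_dcProperLin hd hΔ)
    rwa [ENNReal.log_ofReal_of_pos (Real.exp_pos _), Real.log_exp] at h
  · have h := ENNReal.log_le_log (dcImproperLin_le_ofReal_exp d hΔ)
    rwa [ENNReal.log_ofReal_of_pos (by positivity), Real.log_mul two_ne_zero (Real.exp_ne_zero _),
      Real.log_exp] at h

/-- **Separation between proper and improper linear regression via fractional covering
numbers.** (i) There are universal constants `c > 0` and `d₀` with
`log DC_{1/2}(F_Lin, F_Lin) ≥ c d` for all `d ≥ d₀`; (ii) there are universal constants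
`C₀` and `Δ₀ ∈ (0,1)` with `log DC_Δ(F_Lin, F_Lin⁺) ≤ (C₀/Δ²) log(1/Δ)` for all `d ≥ 1`
and `Δ ∈ (0, Δ₀]`. -/
theorem proper_improper_linear_separation :
    (∃ c : ℝ, 0 < c ∧ ∃ d₀ : ℕ, ∀ d : ℕ, d₀ ≤ d →
      ((c * d : ℝ) : EReal) ≤ ENNReal.log (dcProperLin d (1 / 2))) ∧
    (∃ C₀ Δ₀ : ℝ, 0 < Δ₀ ∧ Δ₀ < 1 ∧ ∀ d : ℕ, 1 ≤ d → ∀ Δ : ℝ, 0 < Δ → Δ ≤ Δ₀ →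
      ENNReal.log (dcImproperLin d Δ) ≤ ((C₀ / Δ ^ 2 * Real.log (1 / Δ) : ℝ) : EReal)) := by
  obtain ⟨hproper, himproper⟩ := proper_improper_linear_separation_general
  refine ⟨⟨1 / 8, by norm_num, 1, fun d hd => ?_⟩,
    ⟨4, 1 / 2, by norm_num, by norm_num, fun d _ Δ hΔ hΔ₀ => ?_⟩⟩
  · convert hproper d (Nat.one_le_iff_ne_zero.1 hd) (1 / 2) (by norm_num) using 2
    ring
  · exact (himproper d Δ hΔ).trans (EReal.coe_le_coe_iff.2 (log_two_add_two_div_sq_le hΔ hΔ₀))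
end
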